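/- arXiv:2310.11174 — 11 statements merged into one kernel-verified Lean document; each statement's English description precedes it below -/
import Mathlib

section
/- Assume a : [0,1] → ℝ is continuous on [0,1] and C¹ on (0,1], with a(x) > 0 for x ∈ (0,1], a(0) = 0, and m_a := sup_{0<x≤1} x·|a'(x)|/a(x) < 1. Then C_* := ∫₀¹ 1/a(s) ds is finite, and every u ∈ H¹_a(0,1) with lim_{x→0⁺} u(x) = 0 satisfies the weighted Poincaré inequality ∫₀¹ |u(x)|² dx ≤ C_* · ∫₀¹ a(x)|u'(x)|² dx. -/
/-!
The bound `x |a' x| ≤ ma * a x` makes `x ↦ a x * x ^ (-ma)` antitone on `(0,1]`, so that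
`a x ≥ a 1 * x ^ ma`. As `ma < 1`, `1 / a` is dominated by the integrable function
`x ↦ (a 1)⁻¹ * x ^ (-ma)`.

For `0 < ε ≤ x ≤ 1`, Cauchy–Schwarz applied to `‖u'‖ = (1/√a) * (√a ‖u'‖)` gives
`‖u x - u ε‖² ≤ (∫ 1/a) * ∫ a ‖u'‖²`. Letting `ε → 0⁺` yields the same bound for `‖u x‖²`,
uniformly in `x`, and it remains to integrate over the unit interval.
-/

open MeasureTheory Set Filter

/-- `u` belongs to the weighted space `H¹_a(0,1)`: `u ∈ L²(0,1)`, `u` is locally absolutely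
continuous on `(0,1]` with density `u'` (fundamental theorem of calculus form), and
`√a · u' ∈ L²(0,1)`. -/
def MemH1a (a : ℝ → ℝ) (u u' : ℝ → ℂ) : Prop :=
  IntegrableOn (fun x => ‖u x‖ ^ 2) (Ioo 0 1) ∧
  (∀ x ∈ Ioc (0:ℝ) 1, ∀ y ∈ Ioc (0:ℝ) 1, IntervalIntegrable u' volume x y) ∧
  (∀ x ∈ Ioc (0:ℝ) 1, ∀ y ∈ Ioc (0:ℝ) 1, u y - u x = ∫ t in x..y, u' t) ∧
  IntegrableOn (fun x => a x * ‖u' x‖ ^ 2) (Ioo 0 1)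

/-- The lower bound `a 1 * x ^ m ≤ a x`, obtained from the monotonicity of `x ↦ a x * x ^ (-m)`. -/
lemma mul_rpow_le_of_mul_abs_deriv_le (a a' : ℝ → ℝ) (m : ℝ)
    (ha_deriv : ∀ x ∈ Ioc (0:ℝ) 1, HasDerivAt a (a' x) x)
    (h : ∀ x ∈ Ioc (0:ℝ) 1, x * |a' x| ≤ m * a x) {x : ℝ} (hx : x ∈ Ioc (0:ℝ) 1) :
    a 1 * x ^ m ≤ a x := by
  have hd : ∀ y ∈ Ioc (0:ℝ) 1, HasDerivAt (fun z => a z * z ^ (-m))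
      (a' y * y ^ (-m) + a y * (-m * y ^ (-m - 1))) y := fun y hy =>
    (ha_deriv y hy).mul (Real.hasDerivAt_rpow_const (Or.inl hy.1.ne'))
  have hanti : AntitoneOn (fun z => a z * z ^ (-m)) (Ioc 0 1) := by
    apply antitoneOn_of_deriv_nonpos (convex_Ioc 0 1)
    · exact fun y hy => (hd y hy).continuousAt.continuousWithinAt
    · exact fun y hy => (hd y (interior_subset hy)).differentiableAt.differentiableWithinAt
    · intro y hy
      have hy := interior_subset hy
      rw [(hd y hy).deriv]
      have e : y ^ (-m) = y * y ^ (-m - 1) := by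
        rw [Real.rpow_sub_one hy.1.ne', mul_div_cancel₀ _ hy.1.ne']
      have e' : a' y * y ^ (-m) + a y * (-m * y ^ (-m - 1))
          = (y * a' y - m * a y) * y ^ (-m - 1) := by
        rw [e]; ring
      rw [e']
      apply mul_nonpos_of_nonpos_of_nonneg _ (Real.rpow_nonneg hy.1.le _)
      have := mul_le_mul_of_nonneg_left (le_abs_self (a' y)) hy.1.le
      linarith [h y hy]
  have h1 := hanti hx (right_mem_Ioc.2 one_pos) hx.2
  simp only [Real.one_rpow, mul_one] at h1
  calc a 1 * x ^ m ≤ a x * x ^ (-m) * x ^ m :=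
        mul_le_mul_of_nonneg_right h1 (Real.rpow_nonneg hx.1.le _)
    _ = a x := by rw [mul_assoc, ← Real.rpow_add hx.1]; simp

/-- If `a` is continuous on `[0,1]`, `C¹` on `(0,1]` with derivative `a'`, positive on `(0,1]`,
vanishes at `0`, and `m_a = sup_{0<x≤1} x|a'(x)|/a(x) < 1`, then `∫₀¹ 1/a` is finite and the
weighted Poincaré inequality holds for every `u ∈ H¹_a(0,1)` with `u(0⁺) = 0`. -/
theorem weighted_poincare
    (a a' : ℝ → ℝ) (ma : ℝ)
    (ha_cont : ContinuousOn a (Icc 0 1))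
    (ha_deriv : ∀ x ∈ Ioc (0:ℝ) 1, HasDerivAt a (a' x) x)
    (ha'_cont : ContinuousOn a' (Ioc 0 1))
    (ha_pos : ∀ x ∈ Ioc (0:ℝ) 1, 0 < a x)
    (ha0 : a 0 = 0)
    (hma : IsLUB {r : ℝ | ∃ x ∈ Ioc (0:ℝ) 1, r = x * |a' x| / a x} ma)
    (hma_lt : ma < 1) :
    IntegrableOn (fun s => 1 / a s) (Ioo 0 1) ∧
    ∀ u u' : ℝ → ℂ, MemH1a a u u' →
      Tendsto u (nhdsWithin 0 (Ioi 0)) (nhds 0) →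
      ∫ x in Ioo (0:ℝ) 1, ‖u x‖ ^ 2 ≤
        (∫ s in Ioo (0:ℝ) 1, 1 / a s) * ∫ x in Ioo (0:ℝ) 1, a x * ‖u' x‖ ^ 2 := by
  have hpt : ∀ x ∈ Ioc (0:ℝ) 1, x * |a' x| ≤ ma * a x := fun x hx =>
    (div_le_iff₀ (ha_pos x hx)).1 (hma.1 ⟨x, hx, rfl⟩)
  have h1 : 0 < a 1 := ha_pos 1 (right_mem_Ioc.2 one_pos)
  have hint : IntegrableOn (fun s => 1 / a s) (Ioo 0 1) := by
    have hdom : IntegrableOn (fun s : ℝ => (a 1)⁻¹ * s ^ (-ma)) (Ioo 0 1) :=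
      ((intervalIntegral.integrableOn_Ioo_rpow_iff one_pos).2 (by linarith)).const_mul _
    refine hdom.mono' ?_ ?_
    · refine ContinuousOn.aestronglyMeasurable ?_ measurableSet_Ioo
      exact continuousOn_const.div (ha_cont.mono Ioo_subset_Icc_self)
        fun x hx => (ha_pos x (Ioo_subset_Ioc_self hx)).ne'
    · refine (ae_restrict_iff' measurableSet_Ioo).2 (Eventually.of_forall fun x hx => ?_)
      have hx' := Ioo_subset_Ioc_self hx
      have hle := mul_rpow_le_of_mul_abs_deriv_le a a' ma ha_deriv hpt hx'
      rw [Real.norm_of_nonneg (one_div_pos.2 (ha_pos x hx')).le, Real.rpow_neg hx.1.le,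
        ← mul_inv, one_div]
      exact inv_anti₀ (mul_pos h1 (Real.rpow_pos_of_pos hx.1 _)) hle
  refine ⟨hint, fun u u' ⟨hu, hu'i, hftc, hD⟩ hlim => ?_⟩
  set C := ∫ s in Ioo (0:ℝ) 1, 1 / a s
  set D := ∫ x in Ioo (0:ℝ) 1, a x * ‖u' x‖ ^ 2
  have hint' := (integrableOn_Ioc_iff_integrableOn_Ioo enorm_ne_top).2 hint
  have hD' := (integrableOn_Ioc_iff_integrableOn_Ioo enorm_ne_top).2 hD
  have hinc : ∀ x ∈ Ioc (0:ℝ) 1, ∀ e ∈ Ioc (0:ℝ) x, ‖u x - u e‖ ^ 2 ≤ C * D := by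
    intro x hx e he
    have he1 : e ∈ Ioc (0:ℝ) 1 := ⟨he.1, he.2.trans hx.2⟩
    have hsub : Ioc e x ⊆ Ioc (0:ℝ) 1 := Ioc_subset_Ioc he.1.le hx.2
    have hN : ‖u x - u e‖ ≤ ∫ t in Ioc e x, ‖u' t‖ := by
      rw [hftc e he1 x hx, ← intervalIntegral.integral_of_le he.2]
      exact intervalIntegral.norm_integral_le_integral_norm he.2
    have hI : IntegrableOn (fun t => ‖u' t‖) (Ioc e x) :=
      ((intervalIntegrable_iff_integrableOn_Ioc_of_le he.2).1 (hu'i e he1 x hx)).norm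
    set I := ∫ t in Ioc e x, ‖u' t‖
    -- Cauchy–Schwarz through the discriminant of a nonnegative quadratic in `t`.
    have hquad : ∀ t : ℝ, 0 ≤ C * (t * t) + (-2 * I) * t + D := by
      intro t
      have hs : IntegrableOn (fun s => t * t * (1 / a s) + a s * ‖u' s‖ ^ 2) (Ioc 0 1) :=
        (hint'.const_mul _).add hD'
      have key : ∀ s ∈ Ioc (0:ℝ) 1,
          2 * t * ‖u' s‖ ≤ t * t * (1 / a s) + a s * ‖u' s‖ ^ 2 := by
        intro s hsm
        have hp := ha_pos s hsm
        have : t * t * (1 / a s) + a s * ‖u' s‖ ^ 2 - 2 * t * ‖u' s‖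
            = (t - a s * ‖u' s‖) ^ 2 / a s := by
          field_simp
          ring
        have h2 : 0 ≤ (t - a s * ‖u' s‖) ^ 2 / a s := by positivity
        linarith
      have : 2 * t * I ≤ t * t * C + D := by
        calc 2 * t * I = ∫ s in Ioc e x, 2 * t * ‖u' s‖ := (integral_const_mul _ _).symm
          _ ≤ ∫ s in Ioc e x, (t * t * (1 / a s) + a s * ‖u' s‖ ^ 2) :=
              setIntegral_mono_on (hI.const_mul _) (hs.mono_set hsub) measurableSet_Ioc
                fun s hsm => key s (hsub hsm)
          _ ≤ ∫ s in Ioc 0 1, (t * t * (1 / a s) + a s * ‖u' s‖ ^ 2) := by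
              refine setIntegral_mono_set hs ?_ hsub.eventuallyLE
              refine (ae_restrict_iff' measurableSet_Ioc).2 (Eventually.of_forall fun s hsm => ?_)
              have hp := ha_pos s hsm
              have := mul_self_nonneg t
              simp only [Pi.zero_apply]
              positivity
          _ = t * t * C + D := by
              rw [integral_add (hint'.const_mul _) hD', integral_const_mul,
                integral_Ioc_eq_integral_Ioo, integral_Ioc_eq_integral_Ioo]
      linarith
    have hdisc := discrim_le_zero hquad
    rw [discrim] at hdisc
    have := pow_le_pow_left₀ (norm_nonneg _) hN 2
    linarith
  have hbound : ∀ x ∈ Ioo (0:ℝ) 1, ‖u x‖ ^ 2 ≤ C * D := by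
    intro x hx
    have hl : Tendsto (fun e => ‖u x - u e‖ ^ 2) (nhdsWithin 0 (Ioi 0)) (nhds (‖u x - 0‖ ^ 2)) :=
      ((tendsto_const_nhds.sub hlim).norm).pow 2
    rw [sub_zero] at hl
    refine le_of_tendsto hl ?_
    filter_upwards [Ioc_mem_nhdsGT hx.1] with e he
    exact hinc x (Ioo_subset_Ioc_self hx) e he
  calc ∫ x in Ioo (0:ℝ) 1, ‖u x‖ ^ 2 ≤ ∫ _ in Ioo (0:ℝ) 1, C * D :=
        setIntegral_mono_on hu (integrableOn_const (by simp)) measurableSet_Ioo hbound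
    _ = C * D := by simp
end

section
/- Assume a : [0,1] → ℝ is continuous on [0,1] and C¹ on (0,1], with a(x) > 0 for x ∈ (0,1], a(0) = 0, and m_a := sup_{0<x≤1} x·|a'(x)|/a(x) < 2. Then for every u ∈ H¹_a(0,1), lim_{x→0⁺} x·|u(x)|² = 0. -/
/-!
The bound `x |a'| ≤ 2 a` makes `a x / x ^ 2` nonincreasing, so `a 1 * t ^ 2 ≤ a t` on `(0,1]`
(`a_lower_bound`), and hence `t u'(t)` is square integrable. For `y ∈ [x, 2x]`, Cauchy–Schwarz gives
`x ‖u y - u x‖ ^ 2 ≤ (a 1)⁻¹ ∫_x^{2x} a ‖u'‖ ^ 2` (`cauchy_schwarz_weighted`). Averaging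
`‖u x‖ ^ 2 ≤ 2 ‖u y‖ ^ 2 + 2 ‖u y - u x‖ ^ 2` over `y ∈ [x, 2x]` bounds `x ‖u x‖ ^ 2` by the
integral over `[x, 2x]` of the fixed integrable function `2 ‖u‖ ^ 2 + 2 (a 1)⁻¹ a ‖u'‖ ^ 2`, and this
tends to zero by absolute continuity of the integral.
-/

open MeasureTheory Set Filter

/-- `u ∈ H²_a(0,1)`: `u ∈ H¹_a(0,1)` and `a·u'` belongs to the classical Sobolev space
`H¹(0,1)`, with weak derivative `w = (a u')'`. -/
def MemH2a (a : ℝ → ℝ) (u u' w : ℝ → ℂ) : Prop :=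
  MemH1a a u u' ∧
  IntegrableOn (fun x => ‖(a x : ℂ) * u' x‖ ^ 2) (Ioo 0 1) ∧
  IntegrableOn (fun x => ‖w x‖ ^ 2) (Ioo 0 1) ∧
  (∀ x ∈ Ioc (0:ℝ) 1, ∀ y ∈ Ioc (0:ℝ) 1, IntervalIntegrable w volume x y) ∧
  (∀ x ∈ Ioc (0:ℝ) 1, ∀ y ∈ Ioc (0:ℝ) 1,
    (a y : ℂ) * u' y - (a x : ℂ) * u' x = ∫ t in x..y, w t)

lemma a_lower_bound (a a' : ℝ → ℝ)
    (ha_deriv : ∀ x ∈ Ioc (0:ℝ) 1, HasDerivAt a (a' x) x)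
    (h2 : ∀ x ∈ Ioc (0:ℝ) 1, x * a' x ≤ 2 * a x) :
    ∀ x ∈ Ioc (0:ℝ) 1, a 1 * x ^ 2 ≤ a x := by
  have hd : ∀ x ∈ Ioc (0:ℝ) 1, HasDerivAt (fun t => a t / t ^ 2)
      ((a' x * x ^ 2 - a x * (2 * x)) / (x ^ 2) ^ 2) x := by
    intro x hx
    have hx0 : x ≠ 0 := hx.1.ne'
    have h := (ha_deriv x hx).div (hasDerivAt_pow 2 x) (by positivity)
    refine HasDerivAt.congr_deriv (f := fun t => a t / t ^ 2) h ?_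
    norm_num
  have hanti : AntitoneOn (fun t => a t / t ^ 2) (Ioc 0 1) := by
    apply antitoneOn_of_deriv_nonpos (convex_Ioc 0 1)
    · exact fun x hx => (hd x hx).continuousAt.continuousWithinAt
    · intro x hx
      exact (hd x (interior_subset hx)).differentiableAt.differentiableWithinAt
    · intro x hx
      have hx' := interior_subset hx
      rw [(hd x hx').deriv]
      apply div_nonpos_of_nonpos_of_nonneg _ (by positivity)
      nlinarith [h2 x hx', hx'.1]
  intro x hx
  have h := hanti hx (right_mem_Ioc.2 one_pos) hx.2
  have hx0 : 0 < x ^ 2 := pow_pos hx.1 2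
  simp only [one_pow, div_one] at h
  rwa [le_div_iff₀ hx0] at h

/-- Cauchy–Schwarz on `[x, 2x]`, with the weight `t ^ 2` absorbed into a dominating function `g`
so that no integrability of `f ^ 2` is required. -/
lemma cauchy_schwarz_weighted (f g : ℝ → ℝ) (x : ℝ) (hx : 0 < x)
    (hf : IntervalIntegrable f volume x (2 * x)) (hg : IntervalIntegrable g volume x (2 * x))
    (h : ∀ t ∈ Icc x (2 * x), t ^ 2 * f t ^ 2 ≤ g t) :
    x * (∫ t in x..2 * x, f t) ^ 2 ≤ ∫ t in x..2 * x, g t := by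
  set I := ∫ t in x..2 * x, f t with hI
  -- Integrate `2 m x² f ≤ m² x² + g`, where `m = I / x` is the mean of `f`.
  have key : ∫ t in x..2 * x, (2 * I * x) * f t ≤ ∫ t in x..2 * x, (I ^ 2 + g t) := by
    apply intervalIntegral.integral_mono_on (by linarith) (hf.const_mul _)
      (intervalIntegrable_const.add hg)
    intro t ht
    have h1 := h t ht
    have h3 : x ^ 2 * f t ^ 2 ≤ t ^ 2 * f t ^ 2 := by
      have := ht.1
      gcongr
    nlinarith [sq_nonneg (I - x * f t)]
  rw [intervalIntegral.integral_const_mul,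
    intervalIntegral.integral_add intervalIntegrable_const hg,
    intervalIntegral.integral_const, ← hI, smul_eq_mul] at key
  nlinarith

/-- Under the degeneracy hypotheses with `m_a < 2`, every `u ∈ H¹_a(0,1)` satisfies
`lim_{x→0⁺} x·|u(x)|² = 0`. -/
theorem limit_x_u_sq_zero
    (a a' : ℝ → ℝ) (ma : ℝ)
    (ha_cont : ContinuousOn a (Icc 0 1))
    (ha_deriv : ∀ x ∈ Ioc (0:ℝ) 1, HasDerivAt a (a' x) x)
    (ha'_cont : ContinuousOn a' (Ioc 0 1))
    (ha_pos : ∀ x ∈ Ioc (0:ℝ) 1, 0 < a x)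
    (ha0 : a 0 = 0)
    (hma : IsLUB {r : ℝ | ∃ x ∈ Ioc (0:ℝ) 1, r = x * |a' x| / a x} ma)
    (hma_lt : ma < 2) :
    ∀ u u' : ℝ → ℂ, MemH1a a u u' →
      Tendsto (fun x => x * ‖u x‖ ^ 2) (nhdsWithin 0 (Ioi 0)) (nhds 0) := by
  rintro u u' ⟨hu, hu'i, hftc, hau⟩
  have h2 : ∀ x ∈ Ioc (0:ℝ) 1, x * a' x ≤ 2 * a x := by
    intro x hx
    have h := hma.1 ⟨x, hx, rfl⟩
    rw [div_le_iff₀ (ha_pos x hx)] at h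
    nlinarith [ha_pos x hx, mul_le_mul_of_nonneg_left (le_abs_self (a' x)) hx.1.le]
  have hlow := a_lower_bound a a' ha_deriv h2
  have ha1 : 0 < a 1 := ha_pos 1 (right_mem_Ioc.2 one_pos)
  have huI : IntervalIntegrable (fun x => ‖u x‖ ^ 2) volume 0 1 :=
    (intervalIntegrable_iff_integrableOn_Ioo_of_le zero_le_one).2 hu
  have hgI : IntervalIntegrable (fun x => (a 1)⁻¹ * (a x * ‖u' x‖ ^ 2)) volume 0 1 :=
    ((intervalIntegrable_iff_integrableOn_Ioo_of_le zero_le_one).2 hau).const_mul _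
  set G : ℝ → ℝ := fun x => 2 * ‖u x‖ ^ 2 + 2 * ((a 1)⁻¹ * (a x * ‖u' x‖ ^ 2)) with hG
  have hGI : IntervalIntegrable G volume 0 1 := (huI.const_mul 2).add (hgI.const_mul 2)
  have hsub : ∀ x y : ℝ, 0 ≤ x → x ≤ 1 → 0 ≤ y → y ≤ 1 → uIcc x y ⊆ uIcc (0:ℝ) 1 := by
    intro x y hx hx' hy hy'
    rw [uIcc_of_le (zero_le_one (α := ℝ))]
    exact uIcc_subset_Icc ⟨hx, hx'⟩ ⟨hy, hy'⟩
  have hbound : ∀ x, 0 < x → 2 * x ≤ 1 → x * ‖u x‖ ^ 2 ≤ ∫ t in x..2 * x, G t := by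
    intro x hx hx1
    have hxm : x ∈ Ioc (0:ℝ) 1 := ⟨hx, by linarith⟩
    have h2xm : 2 * x ∈ Ioc (0:ℝ) 1 := ⟨by linarith, hx1⟩
    have hs := hsub x (2 * x) hx.le hxm.2 h2xm.1.le hx1
    have hn : IntervalIntegrable (fun t => ‖u' t‖) volume x (2 * x) := (hu'i x hxm _ h2xm).norm
    have hcs := cauchy_schwarz_weighted (fun t => ‖u' t‖)
      (fun t => (a 1)⁻¹ * (a t * ‖u' t‖ ^ 2)) x hx hn (hgI.mono_set hs) (by
        intro t ht
        have h := hlow t ⟨hx.trans_le ht.1, ht.2.trans hx1⟩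
        rw [← mul_assoc]
        gcongr
        rwa [inv_mul_eq_div, le_div_iff₀ ha1, mul_comm])
    set I := ∫ t in x..2 * x, ‖u' t‖ with hI
    have hdiff : ∀ y ∈ Icc x (2 * x), ‖u x‖ ^ 2 ≤ 2 * ‖u y‖ ^ 2 + 2 * I ^ 2 := by
      intro y hy
      have h1 : ‖u y - u x‖ ≤ I := by
        rw [hftc x hxm y ⟨hx.trans_le hy.1, hy.2.trans hx1⟩]
        refine (intervalIntegral.norm_integral_le_integral_norm hy.1).trans ?_
        exact intervalIntegral.integral_mono_interval le_rfl hy.1 hy.2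
          (Eventually.of_forall fun t => norm_nonneg _) hn
      have h3 : ‖u x‖ ≤ ‖u y‖ + I := by
        have := norm_sub_norm_le (u x) (u y)
        rw [norm_sub_rev] at this
        linarith
      have h4 : ‖u x‖ ^ 2 ≤ (‖u y‖ + I) ^ 2 := by gcongr
      nlinarith [sq_nonneg (‖u y‖ - I)]
    have hu2 := (huI.mono_set hs).const_mul 2
    have hint := intervalIntegral.integral_mono_on (by linarith : x ≤ 2 * x)
      intervalIntegrable_const (hu2.add intervalIntegrable_const) hdiff
    rw [intervalIntegral.integral_add hu2 intervalIntegrable_const,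
      intervalIntegral.integral_const, intervalIntegral.integral_const, smul_eq_mul,
      smul_eq_mul] at hint
    rw [hG, intervalIntegral.integral_add hu2 ((hgI.mono_set hs).const_mul 2),
      intervalIntegral.integral_const_mul 2 (fun t => (a 1)⁻¹ * (a t * ‖u' t‖ ^ 2))]
    linarith
  have hH : Tendsto (fun x => ∫ t in (0:ℝ)..x, G t) (nhdsWithin 0 (Icc 0 1)) (nhds 0) := by
    have hc := intervalIntegral.continuousOn_primitive_interval' hGI left_mem_uIcc
    rw [uIcc_of_le (zero_le_one (α := ℝ))] at hc
    simpa [ContinuousWithinAt] using hc 0 (left_mem_Icc.2 zero_le_one)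
  have hev : ∀ᶠ x in nhdsWithin (0:ℝ) (Ioi 0), 0 < x ∧ 2 * x ≤ 1 := by
    filter_upwards [Ioo_mem_nhdsGT (show (0:ℝ) < 1 / 2 by norm_num)] with x hx
    exact ⟨hx.1, by linarith [hx.2]⟩
  have hid : Tendsto (fun x : ℝ => x) (nhdsWithin 0 (Ioi 0)) (nhds 0) :=
    tendsto_id.mono_left nhdsWithin_le_nhds
  have ht1 : Tendsto (fun x : ℝ => x) (nhdsWithin 0 (Ioi 0)) (nhdsWithin 0 (Icc 0 1)) :=
    tendsto_nhdsWithin_iff.2 ⟨hid, hev.mono fun x hx => ⟨hx.1.le, by linarith [hx.1]⟩⟩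
  have ht2 : Tendsto (fun x : ℝ => 2 * x) (nhdsWithin 0 (Ioi 0)) (nhdsWithin 0 (Icc 0 1)) :=
    tendsto_nhdsWithin_iff.2 ⟨by simpa using hid.const_mul 2,
      hev.mono fun x hx => ⟨by linarith [hx.1], hx.2⟩⟩
  have hlim := (hH.comp ht2).sub (hH.comp ht1)
  rw [sub_zero] at hlim
  refine squeeze_zero' (hev.mono fun x hx => mul_nonneg hx.1.le (sq_nonneg _)) ?_ hlim
  filter_upwards [hev] with x hx
  have hx1 : x ≤ 1 := by linarith [hx.1]
  have h2x : 0 ≤ 2 * x := by linarith [hx.1]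
  simp only [Function.comp_apply]
  rw [intervalIntegral.integral_interval_sub_left
    (hGI.mono_set (hsub 0 (2 * x) le_rfl zero_le_one h2x hx.2))
    (hGI.mono_set (hsub 0 x le_rfl zero_le_one hx.1.le hx1))]
  exact hbound x hx.1 hx.2
end

section
/- Assume a : [0,1] → ℝ is continuous on [0,1] and C¹ on (0,1], with a(x) > 0 for x ∈ (0,1], a(0) = 0, and m_a := sup_{0<x≤1} x·|a'(x)|/a(x) < 2. Then for every u ∈ H²_a(0,1), lim_{x→0⁺} x·a(x)·u(x)·u'(x) = 0. -/
/-!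
Write `v = a u'`. Since `v' = w ∈ L²(0,1) ⊆ L¹(0,1)`, the function `v` is bounded on `(0,1]`
(`norm_flux_le`). Choosing `m ∈ (1,2)` with `m_a ≤ m`, the bound `x a'(x) ≤ m a(x)` says that
`a(x) x^{-m}` is nonincreasing, so `a(x) ≥ a(1) x^m` (`lower_bound_coeff`). Hence
`|u'| = |v| / a ≤ C x^{-m}`, and integrating from `x` to `1` gives `|u(x)| ≤ |u(1)| + C' x^{1-m}`
(`norm_le_of_density_bound`). Therefore `x a u u' = (x u) v` is `O(x + x^{2-m})`, which tends to `0`.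
-/

open MeasureTheory Set Filter

lemma lower_bound_coeff {a a' : ℝ → ℝ} {m : ℝ}
    (hd : ∀ x ∈ Ioc (0:ℝ) 1, HasDerivAt a (a' x) x)
    (hm : ∀ x ∈ Ioc (0:ℝ) 1, x * a' x ≤ m * a x) :
    ∀ x ∈ Ioc (0:ℝ) 1, a 1 * x ^ m ≤ a x := by
  have hg : ∀ x ∈ Ioc (0:ℝ) 1, HasDerivAt (fun x => a x * x ^ (-m))
      (a' x * x ^ (-m) + a x * (-m * x ^ (-m - 1))) x := fun x hx =>
    (hd x hx).mul (Real.hasDerivAt_rpow_const (Or.inl hx.1.ne'))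
  have hanti : AntitoneOn (fun x => a x * x ^ (-m)) (Ioc (0:ℝ) 1) := by
    refine antitoneOn_of_deriv_nonpos (convex_Ioc 0 1)
      (fun x hx => (hg x hx).continuousAt.continuousWithinAt)
      (fun x hx => (hg x (interior_subset hx)).differentiableAt.differentiableWithinAt) ?_
    intro x hx
    have hx := interior_subset hx
    rw [(hg x hx).deriv]
    have e : x ^ (-m) = x ^ (-m - 1) * x := by
      rw [Real.rpow_sub_one hx.1.ne']; field_simp [hx.1.ne']
    rw [e]
    have := mul_nonneg (Real.rpow_nonneg hx.1.le (-m - 1)) (sub_nonneg.2 (hm x hx))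
    nlinarith
  intro x hx
  have h := hanti hx ⟨one_pos, le_rfl⟩ hx.2
  simp only [Real.one_rpow, mul_one] at h
  calc a 1 * x ^ m ≤ a x * x ^ (-m) * x ^ m :=
        mul_le_mul_of_nonneg_right h (Real.rpow_nonneg hx.1.le m)
    _ = a x := by rw [mul_assoc, ← Real.rpow_add hx.1]; simp

/-- A function on `(0,1]` with an `L²(0,1)` density is bounded, because `|w| ≤ 1 + |w|²`. -/
lemma norm_flux_le {v w : ℝ → ℂ}
    (hw2 : IntegrableOn (fun x => ‖w x‖ ^ 2) (Ioo 0 1))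
    (hwi : ∀ x ∈ Ioc (0:ℝ) 1, IntervalIntegrable w volume x 1)
    (hv : ∀ x ∈ Ioc (0:ℝ) 1, v 1 - v x = ∫ t in x..1, w t) :
    ∃ C, 0 ≤ C ∧ ∀ x ∈ Ioc (0:ℝ) 1, ‖v x‖ ≤ C := by
  have hI : IntegrableOn (fun x => 1 + ‖w x‖ ^ 2) (Ioc 0 1) := by
    rw [integrableOn_Ioc_iff_integrableOn_Ioo]
    exact (integrableOn_const (by simp)).add hw2
  have h0 : ∀ t, 0 ≤ 1 + ‖w t‖ ^ 2 := fun t => by positivity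
  refine ⟨‖v 1‖ + ∫ t in Ioc (0:ℝ) 1, (1 + ‖w t‖ ^ 2),
    add_nonneg (norm_nonneg _) (integral_nonneg h0), fun x hx => ?_⟩
  have h1 : ‖∫ t in x..1, w t‖ ≤ ∫ t in Ioc (0:ℝ) 1, (1 + ‖w t‖ ^ 2) := by
    calc ‖∫ t in x..1, w t‖ ≤ ∫ t in x..1, ‖w t‖ :=
          intervalIntegral.norm_integral_le_integral_norm hx.2
      _ = ∫ t in Ioc x 1, ‖w t‖ := intervalIntegral.integral_of_le hx.2
      _ ≤ ∫ t in Ioc x 1, (1 + ‖w t‖ ^ 2) := by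
          refine setIntegral_mono ((intervalIntegrable_iff_integrableOn_Ioc_of_le hx.2).1
            (hwi x hx)).norm (hI.mono_set (Ioc_subset_Ioc_left hx.1.le)) fun t => ?_
          dsimp only
          nlinarith [sq_nonneg (‖w t‖ - 1), norm_nonneg (w t)]
      _ ≤ _ := setIntegral_mono_set hI (Eventually.of_forall h0)
          (Ioc_subset_Ioc_left hx.1.le).eventuallyLE
  have h2 : v x = v 1 - ∫ t in x..1, w t := by rw [← hv x hx]; ring
  rw [h2]
  exact (norm_sub_le _ _).trans (by gcongr)

lemma norm_le_of_density_bound {u u' : ℝ → ℂ} {K m : ℝ} (hm : 1 < m) (hK : 0 ≤ K)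
    (hu : ∀ x ∈ Ioc (0:ℝ) 1, u 1 - u x = ∫ t in x..1, u' t)
    (hb : ∀ x ∈ Ioc (0:ℝ) 1, ‖u' x‖ ≤ K * x ^ (-m)) :
    ∀ x ∈ Ioc (0:ℝ) 1, ‖u x‖ ≤ ‖u 1‖ + K / (m - 1) * x ^ (1 - m) := by
  intro x hx
  have h0 : (0:ℝ) ∉ uIcc x 1 := by
    rw [uIcc_of_le hx.2]; exact fun h => absurd h.1 (not_le.2 hx.1)
  have h1 : ‖∫ t in x..1, u' t‖ ≤ ∫ t in x..1, K * t ^ (-m) := by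
    refine intervalIntegral.norm_integral_le_of_norm_le hx.2 ?_ ?_
    · exact Eventually.of_forall fun t ht => hb t ⟨hx.1.trans ht.1, ht.2⟩
    · exact (intervalIntegral.intervalIntegrable_rpow (Or.inr h0)).const_mul K
  have h3 : ∫ t in x..1, K * t ^ (-m) ≤ K / (m - 1) * x ^ (1 - m) := by
    rw [intervalIntegral.integral_const_mul, integral_rpow (Or.inr ⟨by linarith, h0⟩),
      Real.one_rpow, show -m + 1 = -(m - 1) by ring, show 1 - m = -(m - 1) by ring, div_neg,
      mul_neg, ← mul_div_assoc, ← neg_div, div_mul_eq_mul_div]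
    refine div_le_div_of_nonneg_right ?_ (by linarith)
    nlinarith
  have h2 : u x = u 1 - ∫ t in x..1, u' t := by rw [← hu x hx]; ring
  rw [h2]
  exact (norm_sub_le _ _).trans (by linarith)

/-- Under the degeneracy hypotheses with `m_a < 2`, every `u ∈ H²_a(0,1)` satisfies
`lim_{x→0⁺} x·a(x)·u(x)·u'(x) = 0`. -/
theorem limit_x_a_u_u'_zero
    (a a' : ℝ → ℝ) (ma : ℝ)
    (ha_cont : ContinuousOn a (Icc 0 1))
    (ha_deriv : ∀ x ∈ Ioc (0:ℝ) 1, HasDerivAt a (a' x) x)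
    (ha'_cont : ContinuousOn a' (Ioc 0 1))
    (ha_pos : ∀ x ∈ Ioc (0:ℝ) 1, 0 < a x)
    (ha0 : a 0 = 0)
    (hma : IsLUB {r : ℝ | ∃ x ∈ Ioc (0:ℝ) 1, r = x * |a' x| / a x} ma)
    (hma_lt : ma < 2) :
    ∀ u u' w : ℝ → ℂ, MemH2a a u u' w →
      Tendsto (fun x : ℝ => (x : ℂ) * (a x : ℂ) * u x * u' x)
        (nhdsWithin 0 (Ioi 0)) (nhds 0) := by
  rintro u u' w ⟨⟨-, -, hu, -⟩, -, hw2, hwi, hv⟩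
  have one_mem : (1:ℝ) ∈ Ioc (0:ℝ) 1 := ⟨one_pos, le_rfl⟩
  obtain ⟨m, hm1, hm2, hmm⟩ : ∃ m : ℝ, 1 < m ∧ m < 2 ∧ ma ≤ m :=
    ⟨max ma (3 / 2), lt_max_of_lt_right (by norm_num), max_lt hma_lt (by norm_num),
      le_max_left _ _⟩
  have hlow := lower_bound_coeff (m := m) ha_deriv fun x hx => by
    have h := (hma.1 ⟨x, hx, rfl⟩).trans hmm
    rw [div_le_iff₀ (ha_pos x hx)] at h
    exact (mul_le_mul_of_nonneg_left (le_abs_self _) hx.1.le).trans h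
  obtain ⟨C, hC, hvC⟩ := norm_flux_le (v := fun x => (a x : ℂ) * u' x) hw2
    (fun x hx => hwi x hx 1 one_mem) (fun x hx => hv x hx 1 one_mem)
  have ha1 := ha_pos 1 one_mem
  have hub := norm_le_of_density_bound (u' := u') (K := C / a 1) hm1 (by positivity)
    (fun x hx => hu x hx 1 one_mem) fun x hx => by
      have h := hvC x hx
      have hxm : 0 < x ^ m := Real.rpow_pos_of_pos hx.1 m
      rw [norm_mul, Complex.norm_real, Real.norm_of_nonneg (ha_pos x hx).le] at h
      rw [Real.rpow_neg hx.1.le, ← div_eq_mul_inv, div_div, le_div_iff₀ (by positivity), mul_comm]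
      exact (mul_le_mul_of_nonneg_right (hlow x hx) (norm_nonneg _)).trans h
  set K := C / a 1 / (m - 1)
  have hlim : Tendsto (fun x : ℝ => (‖u 1‖ * x + K * x ^ (2 - m)) * C)
      (nhdsWithin 0 (Ioi 0)) (nhds 0) := by
    have hc : ContinuousAt (fun x : ℝ => (‖u 1‖ * x + K * x ^ (2 - m)) * C) 0 :=
      ((continuousAt_const.mul continuousAt_id).add (continuousAt_const.mul
        (Real.continuousAt_rpow_const 0 (2 - m) (Or.inr (by linarith))))).mul continuousAt_const
    have h := hc.tendsto
    simp only [Real.zero_rpow (show 2 - m ≠ 0 by linarith), mul_zero, add_zero, zero_mul] at h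
    exact h.mono_left nhdsWithin_le_nhds
  refine squeeze_zero_norm' ?_ hlim
  filter_upwards [Ioc_mem_nhdsGT (zero_lt_one' ℝ)] with x hx
  have e : (x : ℂ) * a x * u x * u' x = ((x : ℂ) * u x) * (a x * u' x) := by ring
  rw [e, norm_mul, norm_mul, Complex.norm_real, Real.norm_of_nonneg hx.1.le]
  have hp : x ^ (2 - m) = x * x ^ (1 - m) := by
    rw [show 2 - m = 1 + (1 - m) by ring, Real.rpow_add hx.1, Real.rpow_one]
  have h1 : x * ‖u x‖ ≤ ‖u 1‖ * x + K * x ^ (2 - m) := by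
    rw [hp]
    nlinarith [mul_le_mul_of_nonneg_left (hub x hx) hx.1.le]
  exact mul_le_mul h1 (hvC x hx) (norm_nonneg _)
    ((mul_nonneg hx.1.le (norm_nonneg _)).trans h1)
end

section
/- Assume a : [0,1] → ℝ is continuous on [0,1] and C¹ on (0,1], with a(x) > 0 for x ∈ (0,1], a(0) = 0, and m_a := sup_{0<x≤1} x·|a'(x)|/a(x) < 2. Then the embedding of H¹_a(0,1) into L²(0,1) is compact: every sequence (u_n) with sup_n [∫₀¹ (a(x)|u_n'(x)|² + |u_n(x)|²) dx] < ∞ admits a subsequence that converges strongly in L²(0,1). -/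
/-!
Since `x |a' x| / a x ≤ p` for some exponent `1 < p < 2`, the quotient `a x / x ^ p` is
nonincreasing on `(0,1]`, so `a x ≥ a 1 * x ^ p` there (`weight_lower_bound`).  By Cauchy–Schwarz
this gives the Hölder-type estimate `‖u y - u x‖² ≤ (M / c) ∫ₓʸ t ^ (-p) dt` for `u` in the weighted
space (`norm_sub_sq_le`).  Two consequences follow for a sequence bounded in the norm:

* the functions are equicontinuous from the right at each point of `(0,1)`
  (`norm_sub_sq_le_mul`), which suffices to compare with rational points;
* they satisfy `‖u x‖² ≤ B + A * x ^ (1 - p)` with uniform constants (`exists_majorant`), and the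
  right side is integrable on `(0,1)` because `p < 2`.

A subsequence converging at all rational points of `(0,1)` therefore converges pointwise on `(0,1)`
(`exists_subseq_pointwise`), and dominated convergence upgrades this to `L²` convergence.
-/

open MeasureTheory Set Filter

/-- Power lower bound for the weight: `a x * x ^ (-p)` is nonincreasing on `(0,1]`. -/
lemma weight_lower_bound (a a' : ℝ → ℝ) (ma : ℝ)
    (ha_deriv : ∀ x ∈ Ioc (0:ℝ) 1, HasDerivAt a (a' x) x)
    (ha_pos : ∀ x ∈ Ioc (0:ℝ) 1, 0 < a x)
    (hma : ∀ x ∈ Ioc (0:ℝ) 1, x * |a' x| / a x ≤ ma)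
    (hma_lt : ma < 2) :
    ∃ c > 0, ∃ p : ℝ, 1 < p ∧ p < 2 ∧ ∀ x ∈ Ioc (0:ℝ) 1, c * x ^ p ≤ a x := by
  refine ⟨a 1, ha_pos 1 (by simp), max ma (3 / 2), by simp; norm_num, by simp [hma_lt]; norm_num, ?_⟩
  set p := max ma (3 / 2) with hp
  have hder : ∀ x ∈ Ioc (0:ℝ) 1,
      HasDerivAt (fun x => a x * x ^ (-p)) (a' x * x ^ (-p) + a x * (-p * x ^ (-p - 1))) x :=
    fun x hx => (ha_deriv x hx).mul (Real.hasDerivAt_rpow_const (Or.inl hx.1.ne'))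
  have hanti : AntitoneOn (fun x => a x * x ^ (-p)) (Ioc (0:ℝ) 1) := by
    apply antitoneOn_of_deriv_nonpos (convex_Ioc 0 1)
    · exact fun x hx => (hder x hx).continuousAt.continuousWithinAt
    · exact fun x hx =>
        (hder x (interior_subset hx)).differentiableAt.differentiableWithinAt
    · intro x hx
      have hx := interior_subset hx
      rw [(hder x hx).deriv]
      have h1 : x * |a' x| ≤ p * a x := by
        have := (hma x hx).trans (le_max_left ma (3 / 2))
        rwa [div_le_iff₀ (ha_pos x hx)] at this
      have h2 : x ^ (-p) = x * x ^ (-p - 1) := by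
        rw [Real.rpow_sub_one hx.1.ne']; field_simp [hx.1.ne']
      have h3 : x * a' x ≤ x * |a' x| := mul_le_mul_of_nonneg_left (le_abs_self _) hx.1.le
      have h4 : 0 ≤ x ^ (-p - 1) := Real.rpow_nonneg hx.1.le _
      rw [h2]
      nlinarith [mul_nonneg h4 (sub_nonneg.2 (h3.trans h1))]
  intro x hx
  have h := hanti hx (right_mem_Ioc.2 one_pos) hx.2
  simp only [Real.one_rpow, mul_one] at h
  calc a 1 * x ^ p ≤ a x * x ^ (-p) * x ^ p :=
        mul_le_mul_of_nonneg_right h (Real.rpow_nonneg hx.1.le _)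
    _ = a x := by
        rw [mul_assoc, ← Real.rpow_add hx.1]; simp

/-- Cauchy–Schwarz for the increment, obtained by integrating the pointwise inequality
`2 ‖u'‖ ≤ l * t ^ (-p) + t ^ p * ‖u'‖² / l` and optimizing over `l > 0`. -/
lemma norm_sub_sq_le {a : ℝ → ℝ} {u u' : ℝ → ℂ} {c p M : ℝ} (hc : 0 < c)
    (hcp : ∀ x ∈ Ioc (0:ℝ) 1, c * x ^ p ≤ a x)
    (hu : MemH1a a u u') (hM : ∫ x in Ioo (0:ℝ) 1, a x * ‖u' x‖ ^ 2 ≤ M)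
    {x y : ℝ} (hx : 0 < x) (hxy : x ≤ y) (hy : y ≤ 1) :
    ‖u y - u x‖ ^ 2 ≤ M / c * ∫ t in x..y, t ^ (-p) := by
  obtain ⟨-, hi, hftc, hau⟩ := hu
  rcases hxy.eq_or_lt with rfl | hlt
  · simp
  have hx1 : x ∈ Ioc (0:ℝ) 1 := ⟨hx, hxy.trans hy⟩
  have hy1 : y ∈ Ioc (0:ℝ) 1 := ⟨hx.trans_le hxy, hy⟩
  have hapos : ∀ t ∈ Ioc (0:ℝ) 1, 0 ≤ a t := fun t ht =>
    (mul_nonneg hc.le (Real.rpow_nonneg ht.1.le _)).trans (hcp t ht)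
  have hau' : IntegrableOn (fun x => a x * ‖u' x‖ ^ 2) (Ioc 0 1) :=
    (integrableOn_Ioc_iff_integrableOn_Ioo).2 hau
  have hsub : Ioc x y ⊆ Ioc (0:ℝ) 1 := fun t ht => ⟨hx.trans ht.1, ht.2.trans hy⟩
  have hM' : ∫ t in x..y, a t * ‖u' t‖ ^ 2 ≤ M := by
    rw [intervalIntegral.integral_of_le hxy]
    refine le_trans ?_ hM
    rw [← integral_Ioc_eq_integral_Ioo]
    refine setIntegral_mono_set hau' ?_ hsub.eventuallyLE
    filter_upwards [ae_restrict_mem measurableSet_Ioc] with t ht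
    exact mul_nonneg (hapos t ht) (by positivity)
  have hIa : IntervalIntegrable (fun t => a t * ‖u' t‖ ^ 2) volume x y :=
    (intervalIntegrable_iff_integrableOn_Ioc_of_le hxy).2 (hau'.mono_set hsub)
  have hIp : IntervalIntegrable (fun t : ℝ => t ^ (-p)) volume x y := by
    apply intervalIntegral.intervalIntegrable_rpow
    right; rw [uIcc_of_le hxy]; exact fun h => absurd h.1 (not_le.2 hx)
  have hI : 0 < ∫ t in x..y, t ^ (-p) :=
    intervalIntegral.intervalIntegral_pos_of_pos_on hIp
      (fun t ht => Real.rpow_pos_of_pos (hx.trans ht.1) _) hlt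
  set I := ∫ t in x..y, t ^ (-p) with hIdef
  set S := ‖u y - u x‖ with hS
  have hS0 : 0 ≤ S := norm_nonneg _
  have key : ∀ l > 0, 2 * S ≤ l * I + M / c / l := by
    intro l hl
    have h1 : S ≤ ∫ t in x..y, ‖u' t‖ := by
      rw [hS, hftc x hx1 y hy1]
      exact intervalIntegral.norm_integral_le_integral_norm hxy
    have h2 : ∫ t in x..y, 2 * ‖u' t‖ ≤
        ∫ t in x..y, (l * t ^ (-p) + (c * l)⁻¹ * (a t * ‖u' t‖ ^ 2)) := by
      apply intervalIntegral.integral_mono_on hxy ((hi x hx1 y hy1).norm.const_mul 2)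
        ((hIp.const_mul l).add (hIa.const_mul _))
      intro t ht
      have ht0 : 0 < t := hx.trans_le ht.1
      have h3 := hcp t ⟨ht0, ht.2.trans hy⟩
      have h4 : t ^ (-p) = (t ^ p)⁻¹ := Real.rpow_neg ht0.le p
      have h5 : 0 < t ^ p := Real.rpow_pos_of_pos ht0 p
      have h6 : (c * l)⁻¹ * (c * t ^ p * ‖u' t‖ ^ 2) ≤ (c * l)⁻¹ * (a t * ‖u' t‖ ^ 2) := by
        gcongr
      refine le_trans ?_ (add_le_add_right h6 _)
      rw [h4]
      have h7 : l * (t ^ p)⁻¹ + (c * l)⁻¹ * (c * t ^ p * ‖u' t‖ ^ 2) - 2 * ‖u' t‖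
          = (l - t ^ p * ‖u' t‖) ^ 2 / (l * t ^ p) := by
        field_simp; ring
      have h8 : 0 ≤ (l - t ^ p * ‖u' t‖) ^ 2 / (l * t ^ p) := by positivity
      linarith
    rw [intervalIntegral.integral_add (hIp.const_mul l) (hIa.const_mul _),
      intervalIntegral.integral_const_mul, intervalIntegral.integral_const_mul,
      intervalIntegral.integral_const_mul] at h2
    have h9 : (c * l)⁻¹ * ∫ t in x..y, a t * ‖u' t‖ ^ 2 ≤ (c * l)⁻¹ * M := by gcongr
    have h10 : (c * l)⁻¹ * M = M / c / l := by field_simp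
    linarith
  rcases hS0.eq_or_lt with h0 | h0
  · rw [← h0, zero_pow two_ne_zero]
    have hM0 : 0 ≤ M := le_trans
      (setIntegral_nonneg measurableSet_Ioo fun t ht =>
        mul_nonneg (hapos t ⟨ht.1, ht.2.le⟩) (by positivity)) hM
    positivity
  -- The optimal weight in the inequality of arithmetic and geometric means.
  · have h := key (S / I) (by positivity)
    have h1 : S / I * I = S := by field_simp
    have h2 : M / c / (S / I) = M / c * I / S := by field_simp
    rw [h1, h2] at h
    have h3 : S ≤ M / c * I / S := by linarith
    rw [le_div_iff₀ h0] at h3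
    nlinarith

lemma norm_sub_sq_le_mul {a : ℝ → ℝ} {u u' : ℝ → ℂ} {c p M : ℝ} (hc : 0 < c) (hp : 1 < p)
    (hM0 : 0 ≤ M) (hcp : ∀ x ∈ Ioc (0:ℝ) 1, c * x ^ p ≤ a x)
    (hu : MemH1a a u u') (hM : ∫ x in Ioo (0:ℝ) 1, a x * ‖u' x‖ ^ 2 ≤ M)
    {x y : ℝ} (hx : 0 < x) (hxy : x ≤ y) (hy : y ≤ 1) :
    ‖u y - u x‖ ^ 2 ≤ M / c * (x ^ (-p) * (y - x)) := by
  refine (norm_sub_sq_le hc hcp hu hM hx hxy hy).trans ?_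
  gcongr
  have hIp : IntervalIntegrable (fun t : ℝ => t ^ (-p)) volume x y := by
    apply intervalIntegral.intervalIntegrable_rpow
    right; rw [uIcc_of_le hxy]; exact fun h => absurd h.1 (not_le.2 hx)
  have := intervalIntegral.integral_mono_on hxy hIp
    (intervalIntegrable_const (c := x ^ (-p)))
    fun t ht => Real.rpow_le_rpow_of_nonpos hx ht.1 (by linarith)
  simpa [mul_comm] using this

lemma norm_one_sub_sq_le {a : ℝ → ℝ} {u u' : ℝ → ℂ} {c p M : ℝ} (hc : 0 < c) (hp : 1 < p)
    (hM0 : 0 ≤ M) (hcp : ∀ x ∈ Ioc (0:ℝ) 1, c * x ^ p ≤ a x)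
    (hu : MemH1a a u u') (hM : ∫ x in Ioo (0:ℝ) 1, a x * ‖u' x‖ ^ 2 ≤ M)
    {x : ℝ} (hx : 0 < x) (hx1 : x ≤ 1) :
    ‖u 1 - u x‖ ^ 2 ≤ M / c / (p - 1) * x ^ (1 - p) := by
  refine (norm_sub_sq_le hc hcp hu hM hx hx1 le_rfl).trans ?_
  have hp' : 0 < p - 1 := by linarith
  rw [integral_rpow (Or.inr ⟨by linarith, by
    rw [uIcc_of_le hx1]; exact fun h => absurd h.1 (not_le.2 hx)⟩)]
  rw [div_mul_eq_mul_div (M / c), mul_div_assoc]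
  refine mul_le_mul_of_nonneg_left ?_ (by positivity)
  rw [Real.one_rpow, show -p + 1 = -(p - 1) by ring, div_neg, ← neg_div,
    show 1 - p = -(p - 1) by ring]
  gcongr
  linarith

lemma norm_sq_le_two (z w : ℂ) : ‖z‖ ^ 2 ≤ 2 * ‖w‖ ^ 2 + 2 * ‖w - z‖ ^ 2 := by
  have h : ‖z‖ ≤ ‖w‖ + ‖w - z‖ := by
    have := norm_sub_le w (w - z)
    simpa using this
  nlinarith [norm_nonneg z, sq_nonneg (‖w‖ - ‖w - z‖)]

lemma integrableOn_rpow_one_sub {p : ℝ} (hp : p < 2) :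
    IntegrableOn (fun x : ℝ => x ^ (1 - p)) (Ioo 0 1) :=
  (intervalIntegral.integrableOn_Ioo_rpow_iff one_pos).2 (by linarith)

/-- The boundary value `u 1` is controlled by averaging `‖u 1‖² ≤ 2 ‖u x‖² + 2 ‖u 1 - u x‖²`
over `(0,1)`; the increment from `1` then controls `u x`. -/
lemma exists_majorant {a : ℝ → ℝ} {c p M : ℝ} (hc : 0 < c) (hp : 1 < p) (hp2 : p < 2)
    (hM0 : 0 ≤ M) (hcp : ∀ x ∈ Ioc (0:ℝ) 1, c * x ^ p ≤ a x) :
    ∃ A B : ℝ, ∀ u u' : ℝ → ℂ, MemH1a a u u' → ∫ x in Ioo (0:ℝ) 1, a x * ‖u' x‖ ^ 2 ≤ M →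
      ∫ x in Ioo (0:ℝ) 1, ‖u x‖ ^ 2 ≤ M →
      ∀ x ∈ Ioo (0:ℝ) 1, ‖u x‖ ^ 2 ≤ B + A * x ^ (1 - p) := by
  set K := M / c / (p - 1) with hK
  refine ⟨2 * K, 2 * (2 * M + 2 * K * ∫ x in Ioo (0:ℝ) 1, x ^ (1 - p)), ?_⟩
  intro u u' hu hM hM2 x hx
  have hJ := integrableOn_rpow_one_sub hp2
  have hdiff : ∀ x ∈ Ioo (0:ℝ) 1, ‖u 1 - u x‖ ^ 2 ≤ K * x ^ (1 - p) := fun x hx =>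
    norm_one_sub_sq_le hc hp hM0 hcp hu hM hx.1 hx.2.le
  have h1 : ‖u 1‖ ^ 2 ≤ 2 * M + 2 * K * ∫ x in Ioo (0:ℝ) 1, x ^ (1 - p) := by
    have hint : ∫ x in Ioo (0:ℝ) 1, ‖u 1‖ ^ 2 ≤
        ∫ x in Ioo (0:ℝ) 1, (2 * ‖u x‖ ^ 2 + 2 * K * x ^ (1 - p)) := by
      refine setIntegral_mono_on (integrableOn_const (by simp))
        ((hu.1.const_mul 2).add (hJ.const_mul _)) measurableSet_Ioo ?_
      intro x hx
      have := norm_sq_le_two (u 1) (u x)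
      rw [norm_sub_rev] at this
      linarith [hdiff x hx]
    rw [integral_add (hu.1.const_mul 2) (hJ.const_mul _), integral_const_mul,
      integral_const_mul] at hint
    simp only [setIntegral_const, Real.volume_real_Ioo, smul_eq_mul] at hint
    norm_num at hint
    linarith
  have := norm_sq_le_two (u x) (u 1)
  linarith [hdiff x hx]

/-- Diagonal extraction: Tychonoff over the rationals gives a subsequence converging at every
rational point, and equicontinuity makes it Cauchy at the remaining ones. -/
lemma exists_subseq_pointwise (u : ℕ → ℝ → ℂ) (g h : ℝ → ℝ)
    (hb : ∀ n, ∀ x ∈ Ioo (0:ℝ) 1, ‖u n x‖ ^ 2 ≤ g x)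
    (hequi : ∀ n, ∀ x y : ℝ, 0 < x → x ≤ y → y ≤ 1 → ‖u n y - u n x‖ ^ 2 ≤ h x * (y - x)) :
    ∃ φ : ℕ → ℕ, StrictMono φ ∧ ∃ v : ℝ → ℂ, ∀ x ∈ Ioo (0:ℝ) 1,
      Tendsto (fun n => u (φ n) x) atTop (nhds (v x)) := by
  classical
  let f : ℕ → ℚ → ℂ := fun n q => if (q : ℝ) ∈ Ioo (0:ℝ) 1 then u n q else 0
  have hcomp : IsCompact (univ.pi fun q : ℚ => Metric.closedBall (0:ℂ) (√(g q))) :=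
    isCompact_univ_pi fun q => isCompact_closedBall _ _
  have hf : ∀ n, f n ∈ univ.pi fun q : ℚ => Metric.closedBall (0:ℂ) (√(g q)) := by
    intro n q _
    simp only [mem_closedBall_zero_iff, f]
    split_ifs with hq
    · exact Real.le_sqrt_of_sq_le (hb n q hq)
    · simp
  obtain ⟨w, -, φ, hφ, hlim⟩ := hcomp.isSeqCompact hf
  refine ⟨φ, hφ, ?_⟩
  have hcau : ∀ x ∈ Ioo (0:ℝ) 1, ∃ z : ℂ, Tendsto (fun n => u (φ n) x) atTop (nhds z) := by
    intro x hx
    apply cauchySeq_tendsto_of_complete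
    rw [Metric.cauchySeq_iff]
    intro ε hε
    have hδ : 0 < (ε / 3) ^ 2 / (|h x| + 1) := by positivity
    obtain ⟨q, hq1, hq2⟩ := exists_rat_btwn
      (show x < min 1 (x + (ε / 3) ^ 2 / (|h x| + 1)) from lt_min hx.2 (by linarith))
    rw [lt_min_iff] at hq2
    have hq : (q : ℝ) ∈ Ioo (0:ℝ) 1 := ⟨hx.1.trans hq1, hq2.1⟩
    have hclose : ∀ n, ‖u n q - u n x‖ < ε / 3 := by
      intro n
      have h1 := hequi n x q hx.1 hq1.le hq2.1.le
      have h2 : h x * (q - x) < (ε / 3) ^ 2 := by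
        have h3 : (q - x) * (|h x| + 1) < (ε / 3) ^ 2 := by
          rw [← lt_div_iff₀ (by positivity)]; linarith [hq2.2]
        nlinarith [le_abs_self (h x)]
      exact lt_of_pow_lt_pow_left₀ 2 (by positivity) (h1.trans_lt h2)
    have hq_lim : CauchySeq (fun n => u (φ n) q) := by
      have := (tendsto_pi_nhds.1 hlim q).cauchySeq
      simpa only [f, Function.comp_def, if_pos hq] using this
    obtain ⟨N, hN⟩ := Metric.cauchySeq_iff.1 hq_lim (ε / 3) (by positivity)
    refine ⟨N, fun m hm n hn => ?_⟩
    have h1 := hN m hm n hn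
    have h2 := hclose (φ m)
    have h3 := hclose (φ n)
    rw [← dist_eq_norm] at h2 h3
    rw [dist_comm] at h2
    linarith [dist_triangle4 (u (φ m) x) (u (φ m) q) (u (φ n) q) (u (φ n) x)]
  choose! v hv using hcau
  exact ⟨v, hv⟩

lemma MemH1a.continuousOn {a : ℝ → ℝ} {u u' : ℝ → ℂ} (hu : MemH1a a u u') :
    ContinuousOn u (Ioo 0 1) := by
  obtain ⟨-, hi, hftc, -⟩ := hu
  intro x hx
  have hx2 : x / 2 ∈ Ioc (0:ℝ) 1 := ⟨by linarith [hx.1], by linarith [hx.2]⟩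
  have h1 : (1:ℝ) ∈ Ioc (0:ℝ) 1 := by simp
  have hc := intervalIntegral.continuousOn_primitive_interval' (hi _ hx2 1 h1)
    left_mem_uIcc
  rw [uIcc_of_le hx2.2] at hc
  have hcu : ContinuousOn u (Icc (x / 2) 1) := by
    refine (hc.const_add (u (x / 2))).congr fun y hy => ?_
    have := hftc _ hx2 y ⟨hx2.1.trans_le hy.1, hy.2⟩
    simp only [← this]; ring
  exact (hcu.continuousAt (Icc_mem_nhds (by linarith [hx.1]) hx.2)).continuousWithinAt

/-- Compact embedding of `H¹_a(0,1)` into `L²(0,1)`: any sequence bounded in the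
`H¹_a`-norm admits a subsequence converging strongly in `L²(0,1)`. -/
theorem compact_embedding_H1a_L2
    (a a' : ℝ → ℝ) (ma : ℝ)
    (ha_cont : ContinuousOn a (Icc 0 1))
    (ha_deriv : ∀ x ∈ Ioc (0:ℝ) 1, HasDerivAt a (a' x) x)
    (ha'_cont : ContinuousOn a' (Ioc 0 1))
    (ha_pos : ∀ x ∈ Ioc (0:ℝ) 1, 0 < a x)
    (ha0 : a 0 = 0)
    (hma : IsLUB {r : ℝ | ∃ x ∈ Ioc (0:ℝ) 1, r = x * |a' x| / a x} ma)
    (hma_lt : ma < 2)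
    (u u' : ℕ → ℝ → ℂ)
    (hmem : ∀ n, MemH1a a (u n) (u' n))
    (C : ℝ)
    (hbound : ∀ n, ∫ x in Ioo (0:ℝ) 1, (a x * ‖u' n x‖ ^ 2 + ‖u n x‖ ^ 2) ≤ C) :
    ∃ φ : ℕ → ℕ, StrictMono φ ∧
      ∃ v : ℝ → ℂ, IntegrableOn (fun x => ‖v x‖ ^ 2) (Ioo 0 1) ∧
        Tendsto (fun n => ∫ x in Ioo (0:ℝ) 1, ‖u (φ n) x - v x‖ ^ 2) atTop (nhds 0) := by
  obtain ⟨c, hc, p, hp, hp2, hcp⟩ := weight_lower_bound a a' ma ha_deriv ha_pos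
    (fun x hx => hma.1 ⟨x, hx, rfl⟩) hma_lt
  have hnn1 : ∀ n, 0 ≤ ∫ x in Ioo (0:ℝ) 1, a x * ‖u' n x‖ ^ 2 := fun n =>
    setIntegral_nonneg measurableSet_Ioo fun t ht =>
      mul_nonneg (ha_pos t ⟨ht.1, ht.2.le⟩).le (by positivity)
  have hnn2 : ∀ n, 0 ≤ ∫ x in Ioo (0:ℝ) 1, ‖u n x‖ ^ 2 := fun n =>
    setIntegral_nonneg measurableSet_Ioo fun t _ => by positivity
  have hsum : ∀ n, (∫ x in Ioo (0:ℝ) 1, a x * ‖u' n x‖ ^ 2) +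
      ∫ x in Ioo (0:ℝ) 1, ‖u n x‖ ^ 2 ≤ C := fun n => by
    rw [← integral_add (hmem n).2.2.2 (hmem n).1]; exact hbound n
  have hM1 : ∀ n, ∫ x in Ioo (0:ℝ) 1, a x * ‖u' n x‖ ^ 2 ≤ C := fun n => by
    linarith [hsum n, hnn2 n]
  have hM2 : ∀ n, ∫ x in Ioo (0:ℝ) 1, ‖u n x‖ ^ 2 ≤ C := fun n => by
    linarith [hsum n, hnn1 n]
  have hC : 0 ≤ C := (hnn2 0).trans (hM2 0)
  obtain ⟨A, B, hAB⟩ := exists_majorant hc hp hp2 hC hcp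
  have hub := fun n => hAB (u n) (u' n) (hmem n) (hM1 n) (hM2 n)
  obtain ⟨φ, hφ, v, hv⟩ := exists_subseq_pointwise u (fun x => B + A * x ^ (1 - p))
    (fun x => C / c * x ^ (-p)) hub (fun n x y hx hxy hy => by
      rw [mul_assoc]
      exact norm_sub_sq_le_mul hc hp hC hcp (hmem n) (hM1 n) hx hxy hy)
  have hg : IntegrableOn (fun x : ℝ => B + A * x ^ (1 - p)) (Ioo 0 1) :=
    (integrableOn_const (by simp)).add ((integrableOn_rpow_one_sub hp2).const_mul A)
  have hum : ∀ n, AEStronglyMeasurable (u n) (volume.restrict (Ioo 0 1)) := fun n =>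
    (hmem n).continuousOn.aestronglyMeasurable measurableSet_Ioo
  have hvm : AEStronglyMeasurable v (volume.restrict (Ioo 0 1)) := by
    refine aestronglyMeasurable_of_tendsto_ae atTop (fun n => hum (φ n)) ?_
    filter_upwards [ae_restrict_mem measurableSet_Ioo] with x hx using hv x hx
  have hvb : ∀ x ∈ Ioo (0:ℝ) 1, ‖v x‖ ^ 2 ≤ B + A * x ^ (1 - p) := fun x hx =>
    le_of_tendsto ((hv x hx).norm.pow 2) (Eventually.of_forall fun n => hub (φ n) x hx)
  refine ⟨φ, hφ, v, ?_, ?_⟩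
  · refine Integrable.mono' hg (hvm.norm.pow 2) ?_
    filter_upwards [ae_restrict_mem measurableSet_Ioo] with x hx
    rw [Real.norm_of_nonneg (by positivity)]
    exact hvb x hx
  · suffices h : Tendsto (fun n => ∫ x in Ioo (0:ℝ) 1, ‖u (φ n) x - v x‖ ^ 2) atTop
        (nhds (∫ x in Ioo (0:ℝ) 1, (0:ℝ))) by simpa only [integral_zero] using h
    refine tendsto_integral_of_dominated_convergence (fun x => 4 * (B + A * x ^ (1 - p)))
      (fun n => ((hum (φ n)).sub hvm).norm.pow 2) (hg.const_mul 4) ?_ ?_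
    · intro n
      filter_upwards [ae_restrict_mem measurableSet_Ioo] with x hx
      rw [Real.norm_of_nonneg (by positivity)]
      have h1 := hub (φ n) x hx
      have h2 := hvb x hx
      have h3 := norm_sub_le (u (φ n) x) (v x)
      nlinarith [norm_nonneg (u (φ n) x - v x), sq_nonneg (‖u (φ n) x‖ - ‖v x‖)]
    · filter_upwards [ae_restrict_mem measurableSet_Ioo] with x hx
      have := (((hv x hx).sub_const (v x)).norm.pow 2)
      simpa using this
end

section
/- Let 0 < τ < 1, ω ≥ 0, and let U : [0,∞) → ℝ be continuous. Set ϑ(ς) = |ς|^{(2τ−1)/2} and, for ς ∈ ℝ and t ≥ 0, define φ(ς, t) = ∫₀^t e^{−(ς²+ω)(t−s)} ϑ(ς) U(s) ds (the solution of ∂_t φ + (ς² + ω)φ = ϑ(ς)U(t) with φ(ς,0) = 0). Then for every t > 0, (sin(τπ)/π) · ∫_{−∞}^{+∞} ϑ(ς) φ(ς, t) dς = (1/Γ(1−τ)) · ∫₀^t (t−s)^{−τ} e^{−ω(t−s)} U(s) ds; that is, the output O(t) = (sin(τπ)/π)∫_ℝ ϑ φ dς equals the fractional integral I^{1−τ,ω}U(t).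 -/
/-! Since `ϑ² = |ς|^{2τ-1}`, exchanging the two integrals reduces the claim to the Gaussian moment
`∫_ℝ |ς|^{2τ-1} e^{-bς²} dς = Γ(τ) b^{-τ}` with `b = t - s > 0`, followed by Euler's reflection
formula `Γ(τ) Γ(1-τ) = π / sin(πτ)`. Fubini applies because the same moment bounds the inner
integral of absolute values by a multiple of `(t-s)^{-τ}`, which is integrable on `(0, t)`
as `τ < 1`. -/

open MeasureTheory Set Filter

lemma integral_abs_rpow_mul_gaussian {τ b : ℝ} (hτ : 0 < τ) (hb : 0 < b) :
    ∫ x : ℝ, |x| ^ (2 * τ - 1) * Real.exp (-b * x ^ 2) = Real.Gamma τ * b ^ (-τ) := by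
  have h := integral_comp_abs (f := fun x : ℝ => x ^ (2 * τ - 1) * Real.exp (-b * x ^ 2))
  simp only [sq_abs] at h
  rw [h]
  have h2 := integral_rpow_mul_exp_neg_mul_rpow (p := 2) (q := 2 * τ - 1) two_pos
    (by linarith) hb
  simp only [Real.rpow_two] at h2
  rw [h2]
  have e : (2 * τ - 1 + 1) / 2 = τ := by ring
  rw [e, show -(2 * τ - 1 + 1) / 2 = -τ by ring]
  ring

lemma integrable_abs_rpow_mul_gaussian {τ b : ℝ} (hτ : 0 < τ) (hb : 0 < b) :
    Integrable (fun x : ℝ => |x| ^ (2 * τ - 1) * Real.exp (-b * x ^ 2)) := by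
  -- a nonintegrable function would have integral zero
  by_contra hn
  have h := integral_abs_rpow_mul_gaussian hτ hb
  rw [integral_undef hn] at h
  have h1 := Real.Gamma_pos_of_pos hτ
  have h2 := Real.rpow_pos_of_pos hb (-τ)
  have := mul_pos h1 h2
  linarith

/-- The right-hand weight is integrable on `(0, t)`: the singularity `(t-s)^{-τ}` at `s = t` is
integrable and the other factor is continuous. -/
lemma intervalIntegrable_kernel {τ ω t : ℝ} (hτ1 : τ < 1) (ht : 0 < t)
    {U : ℝ → ℝ} (hU : ContinuousOn U (Ici 0)) :
    IntervalIntegrable (fun s => (t - s) ^ (-τ) * (Real.exp (-ω * (t - s)) * U s))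
      volume 0 t := by
  have h1 : IntervalIntegrable (fun s : ℝ => (t - s) ^ (-τ)) volume 0 t := by
    have h := (intervalIntegral.intervalIntegrable_rpow' (a := 0) (b := t) (r := -τ)
      (by linarith)).comp_sub_left t
    simpa using h.symm
  refine h1.mul_continuousOn (ContinuousOn.mul (by fun_prop) (hU.mono ?_))
  rw [uIcc_of_le ht.le]
  exact fun x hx => hx.1

/-- The augmented ("diffusive") realization of the generalized Caputo fractional
integral: for the solution `φ(ς,t) = ∫₀ᵗ e^{−(ς²+ω)(t−s)} ϑ(ς) U(s) ds` of
`∂_t φ + (ς²+ω)φ = ϑ(ς)U(t)`, `φ(ς,0)=0`, with `ϑ(ς) = |ς|^{(2τ−1)/2}`, the output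
`O(t) = (sin(τπ)/π) ∫_ℝ ϑ(ς) φ(ς,t) dς` equals the exponentially weighted
Riemann–Liouville fractional integral `I^{1−τ,ω}U(t)`. -/
theorem diffusive_realization_fractional_integral
    (τ ω : ℝ) (hτ0 : 0 < τ) (hτ1 : τ < 1) (hω : 0 ≤ ω)
    (U : ℝ → ℝ) (hU : ContinuousOn U (Ici 0)) :
    ∀ t : ℝ, 0 < t →
      (Real.sin (τ * Real.pi) / Real.pi) *
          ∫ ς : ℝ, |ς| ^ ((2 * τ - 1) / 2) *
            (∫ s in (0:ℝ)..t, Real.exp (-(ς ^ 2 + ω) * (t - s)) *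
              (|ς| ^ ((2 * τ - 1) / 2) * U s))
        = (1 / Real.Gamma (1 - τ)) *
            ∫ s in (0:ℝ)..t, (t - s) ^ (-τ) * Real.exp (-ω * (t - s)) * U s := by
  intro t ht
  set F : ℝ → ℝ → ℝ := fun x s => (|x| ^ (2 * τ - 1) * Real.exp (-(t - s) * x ^ 2)) *
    (Real.exp (-ω * (t - s)) * U s) with hF
  have hker := intervalIntegrable_kernel (ω := ω) hτ1 ht hU
  rw [intervalIntegrable_iff_integrableOn_Ioc_of_le ht.le, IntegrableOn] at hker
  have hlt : ∀ᵐ s ∂(volume.restrict (Ioc 0 t)), s < t := by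
    rw [← restrict_Ioo_eq_restrict_Ioc]
    exact (ae_restrict_mem measurableSet_Ioo).mono fun s hs => hs.2
  have hUm : AEStronglyMeasurable U (volume.restrict (Ioc 0 t)) :=
    (hU.mono fun x hx => hx.1.le).aestronglyMeasurable measurableSet_Ioc
  have hFm : AEStronglyMeasurable (Function.uncurry F)
      ((volume : Measure ℝ).prod (volume.restrict (Ioc 0 t))) := by
    have hm : Measurable fun p : ℝ × ℝ =>
        |p.1| ^ (2 * τ - 1) * Real.exp (-(t - p.2) * p.1 ^ 2) * Real.exp (-ω * (t - p.2)) := by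
      fun_prop
    refine (hm.aestronglyMeasurable.mul hUm.comp_snd).congr (Eventually.of_forall fun p => ?_)
    simp only [hF, Function.uncurry, Pi.mul_apply]
    ring
  have hFi : Integrable (Function.uncurry F)
      ((volume : Measure ℝ).prod (volume.restrict (Ioc 0 t))) := by
    rw [integrable_prod_iff' hFm]
    constructor
    · filter_upwards [hlt] with s hs
      exact (integrable_abs_rpow_mul_gaussian hτ0 (sub_pos.2 hs)).mul_const
        (Real.exp (-ω * (t - s)) * U s)
    · refine (hker.norm.const_mul (Real.Gamma τ)).congr ?_
      filter_upwards [hlt] with s hs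
      have hn : ∀ x : ℝ, ‖Function.uncurry F (x, s)‖ =
          (|x| ^ (2 * τ - 1) * Real.exp (-(t - s) * x ^ 2)) *
            ‖Real.exp (-ω * (t - s)) * U s‖ := fun x => by
        rw [Function.uncurry_apply_pair, hF, norm_mul, Real.norm_of_nonneg (by positivity)]
      simp only [hn]
      rw [integral_mul_const, integral_abs_rpow_mul_gaussian hτ0 (sub_pos.2 hs), norm_mul,
        Real.norm_of_nonneg (Real.rpow_nonneg (sub_pos.2 hs).le _), mul_assoc]
  have hleft : ∀ x : ℝ, |x| ^ ((2 * τ - 1) / 2) *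
      (∫ s in (0:ℝ)..t, Real.exp (-(x ^ 2 + ω) * (t - s)) * (|x| ^ ((2 * τ - 1) / 2) * U s))
      = ∫ s in Ioc 0 t, F x s := by
    intro x
    rw [intervalIntegral.integral_of_le ht.le, ← integral_const_mul]
    congr 1
    funext s
    have hsq : |x| ^ (2 * τ - 1) = |x| ^ ((2 * τ - 1) / 2) * |x| ^ ((2 * τ - 1) / 2) := by
      rw [← sq, ← Real.rpow_mul_natCast (abs_nonneg x)]
      norm_num
    have hexp : Real.exp (-(x ^ 2 + ω) * (t - s)) =
        Real.exp (-(t - s) * x ^ 2) * Real.exp (-ω * (t - s)) := by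
      rw [← Real.exp_add]
      ring_nf
    simp only [hF]
    rw [hsq, hexp]
    ring
  have hright : ∫ s in Ioc 0 t, ∫ x : ℝ, F x s = Real.Gamma τ *
      ∫ s in (0:ℝ)..t, (t - s) ^ (-τ) * Real.exp (-ω * (t - s)) * U s := by
    rw [intervalIntegral.integral_of_le ht.le, ← integral_const_mul]
    refine integral_congr_ae ?_
    filter_upwards [hlt] with s hs
    simp only [hF]
    rw [integral_mul_const, integral_abs_rpow_mul_gaussian hτ0 (sub_pos.2 hs)]
    ring
  simp only [hleft]
  rw [integral_integral_swap hFi, hright, ← mul_assoc]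
  congr 1
  have hrefl := Real.Gamma_mul_Gamma_one_sub τ
  have hs : 0 < Real.sin (Real.pi * τ) :=
    Real.sin_pos_of_pos_of_lt_pi (by positivity) (by nlinarith [Real.pi_pos])
  have hG : 0 < Real.Gamma (1 - τ) := Real.Gamma_pos_of_pos (by linarith)
  have hpi := Real.pi_pos
  rw [eq_div_iff hs.ne'] at hrefl
  rw [mul_comm τ Real.pi, div_mul_eq_mul_div, div_eq_div_iff hpi.ne' hG.ne']
  linarith
end

section
/- Let 0 < τ < 1 and c > 0. Then ∫_{−∞}^{+∞} |ς|^{2τ−1}/(c + ς²)² dς = (1 − τ) · (π/sin(τπ)) · c^{τ−2}. -/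
open MeasureTheory

/-!
By evenness and the substitution `u = ς²` the integral equals `∫₀^∞ u^{τ-1}/(c+u)² du`. Writing
`1/(c+u)² = ∫₀^∞ t e^{-(c+u)t} dt` and exchanging the order of integration, the inner integral
over `u` is `Γ(τ) t^{-τ}`, and the remaining integral over `t` is `Γ(2-τ) c^{τ-2}`
(`integral_rpow_div_add_sq`). Finally `Γ(2-τ) = (1-τ) Γ(1-τ)`, and the reflection formula for
`Γ(τ) Γ(1-τ)` gives the claim.
-/

/-- Integrability companion of `Real.integral_rpow_mul_exp_neg_mul_Ioi`. -/
lemma integrableOn_rpow_mul_exp_neg {a r : ℝ} (ha : 0 < a) (hr : 0 < r) :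
    IntegrableOn (fun t : ℝ => t ^ (a - 1) * Real.exp (-(r * t))) (Set.Ioi 0) := by
  -- the integral of a non-integrable function is `0`, whereas this one is positive
  apply not_imp_comm.1 integral_undef
  rw [Real.integral_rpow_mul_exp_neg_mul_Ioi ha hr]
  have := Real.Gamma_pos_of_pos ha
  positivity

lemma integral_laplace_kernel_left {τ c t : ℝ} (hτ0 : 0 < τ) (ht : 0 < t) :
    ∫ u in Set.Ioi (0 : ℝ), u ^ (τ - 1) * (t * Real.exp (-((c + u) * t)))
      = Real.Gamma τ * (t ^ ((2 - τ) - 1) * Real.exp (-(c * t))) := by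
  have h : ∀ u : ℝ, u ^ (τ - 1) * (t * Real.exp (-((c + u) * t)))
      = (t * Real.exp (-(c * t))) * (u ^ (τ - 1) * Real.exp (-(t * u))) := fun u => by
    rw [show -((c + u) * t) = -(c * t) + -(t * u) by ring, Real.exp_add]; ring
  simp_rw [h]
  rw [integral_const_mul, Real.integral_rpow_mul_exp_neg_mul_Ioi hτ0 ht,
    show 2 - τ - 1 = 1 - τ by ring, Real.rpow_sub ht, Real.rpow_one, one_div,
    Real.inv_rpow ht.le]
  ring

lemma integral_laplace_kernel_right {τ c u : ℝ} (hc : 0 < c) (hu : 0 < u) :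
    ∫ t in Set.Ioi (0 : ℝ), u ^ (τ - 1) * (t * Real.exp (-((c + u) * t)))
      = u ^ (τ - 1) / (c + u) ^ 2 := by
  have h := Real.integral_rpow_mul_exp_neg_mul_Ioi (a := 2) (r := c + u) two_pos (by positivity)
  norm_num at h
  rw [integral_const_mul, h, div_eq_mul_inv]

lemma integral_rpow_div_add_sq {τ c : ℝ} (hτ0 : 0 < τ) (hτ1 : τ < 1) (hc : 0 < c) :
    ∫ u in Set.Ioi (0 : ℝ), u ^ (τ - 1) / (c + u) ^ 2
      = Real.Gamma τ * (Real.Gamma (2 - τ) * c ^ (τ - 2)) := by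
  have hint : Integrable
      (Function.uncurry fun u t : ℝ => u ^ (τ - 1) * (t * Real.exp (-((c + u) * t))))
      ((volume.restrict (Set.Ioi 0)).prod (volume.restrict (Set.Ioi 0))) := by
    refine (integrable_prod_iff' (Measurable.aestronglyMeasurable ?_)).2 ⟨?_, ?_⟩
    · unfold Function.uncurry
      fun_prop
    · filter_upwards [ae_restrict_mem measurableSet_Ioi] with t ht
      apply not_imp_comm.1 integral_undef
      simp only [Function.uncurry_apply_pair]
      rw [integral_laplace_kernel_left hτ0 ht]
      have := Real.Gamma_pos_of_pos hτ0
      have ht' : 0 < t := ht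
      positivity
    · have h := (integrableOn_rpow_mul_exp_neg (a := 2 - τ) (by linarith) hc).const_mul
        (Real.Gamma τ)
      refine h.congr ?_
      filter_upwards [ae_restrict_mem measurableSet_Ioi] with t ht
      rw [← integral_laplace_kernel_left hτ0 ht]
      refine setIntegral_congr_fun measurableSet_Ioi fun u hu => ?_
      have ht' : 0 < t := ht
      have hu' : 0 < u := hu
      simp only [Function.uncurry_apply_pair]
      rw [Real.norm_of_nonneg (by positivity)]
  calc ∫ u in Set.Ioi (0 : ℝ), u ^ (τ - 1) / (c + u) ^ 2
      = ∫ u in Set.Ioi (0 : ℝ), ∫ t in Set.Ioi (0 : ℝ),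
          u ^ (τ - 1) * (t * Real.exp (-((c + u) * t))) :=
        setIntegral_congr_fun measurableSet_Ioi fun u hu =>
          (integral_laplace_kernel_right hc hu).symm
    _ = ∫ t in Set.Ioi (0 : ℝ), ∫ u in Set.Ioi (0 : ℝ),
          u ^ (τ - 1) * (t * Real.exp (-((c + u) * t))) := integral_integral_swap hint
    _ = ∫ t in Set.Ioi (0 : ℝ), Real.Gamma τ * (t ^ ((2 - τ) - 1) * Real.exp (-(c * t))) :=
        setIntegral_congr_fun measurableSet_Ioi fun t ht => integral_laplace_kernel_left hτ0 ht
    _ = Real.Gamma τ * (Real.Gamma (2 - τ) * c ^ (τ - 2)) := by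
        rw [integral_const_mul, Real.integral_rpow_mul_exp_neg_mul_Ioi (by linarith) hc,
          one_div, Real.inv_rpow hc.le, ← Real.rpow_neg hc.le, neg_sub]
        ring

/-- For `0 < τ < 1` and `c > 0`,
`∫_ℝ |ς|^{2τ−1}/(c + ς²)² dς = (1−τ)·(π/sin(τπ))·c^{τ−2}`. -/
theorem integral_abs_rpow_div_sq_one
    (τ c : ℝ) (hτ0 : 0 < τ) (hτ1 : τ < 1) (hc : 0 < c) :
    ∫ ς : ℝ, |ς| ^ (2 * τ - 1) / (c + ς ^ 2) ^ 2
      = (1 - τ) * (Real.pi / Real.sin (τ * Real.pi)) * c ^ (τ - 2) := by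
  have heven := integral_comp_abs (f := fun x : ℝ => x ^ (2 * τ - 1) / (c + x ^ 2) ^ 2)
  simp only [sq_abs] at heven
  have hsub := integral_comp_rpow_Ioi_of_pos
    (g := fun u : ℝ => u ^ (τ - 1) / (c + u) ^ 2) (p := 2) two_pos
  rw [heven, ← integral_const_mul]
  have hcongr : ∫ x in Set.Ioi (0 : ℝ), 2 * (x ^ (2 * τ - 1) / (c + x ^ 2) ^ 2)
      = ∫ u in Set.Ioi (0 : ℝ), u ^ (τ - 1) / (c + u) ^ 2 := by
    rw [← hsub]
    refine setIntegral_congr_fun measurableSet_Ioi fun x hx => ?_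
    have hx' : 0 < x := hx
    simp only [smul_eq_mul]
    rw [← Real.rpow_mul hx'.le, Real.rpow_two,
      show 2 * τ - 1 = (2 - 1) + 2 * (τ - 1) by ring, Real.rpow_add hx']
    ring
  have hΓ : Real.Gamma (2 - τ) = (1 - τ) * Real.Gamma (1 - τ) := by
    rw [← Real.Gamma_add_one (by linarith)]
    ring_nf
  rw [hcongr, integral_rpow_div_add_sq hτ0 hτ1 hc, hΓ, mul_comm τ Real.pi,
    ← Real.Gamma_mul_Gamma_one_sub]
  ring
end

section
/- Let 0 < τ < 1, ω ≥ 0, and λ ∈ ℝ with λ ≠ 0. Then Re( i·(iλ + ω)^{τ−1} ) = (sin(τπ)/π) · λ · ∫_{−∞}^{+∞} |ς|^{2τ−1}/(λ² + (ω + ς²)²) dς, where the complex power is the principal branch; in particular λ · Re( i·(iλ + ω)^{τ−1} ) > 0. -/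
/-!
The identity is the real part of `i` times Stieltjes' formula
`z ^ (τ - 1) = (sin (τ π) / π) ∫₀^∞ t ^ (τ - 1) / (t + z) dt`, valid on the slit plane, read at
`z = ω + iλ` and followed by the substitution `t = ς²`.

Stieltjes' formula (`integral_rpow_div_add_cpow`) is proved by the identity theorem. Both sides
are holomorphic on the slit plane, by differentiation under the integral sign with the locally
uniform bound `1 + t ≤ K ‖t + z‖`. On the positive half-line they agree by scaling, up to the
constant `∫₀^∞ t ^ (τ - 1) / (t + 1) dt`. That constant equals `Γ(τ) Γ(1 - τ) = π / sin (π τ)`: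
write `1 / (t + 1) = ∫₀^∞ e ^ (-(t + 1) s) ds` and apply Fubini.

Positivity follows since `sin (τ π) > 0` and the integrand is positive.
-/

open MeasureTheory Complex

open Set Filter Topology

lemma integrableOn_rpow_div_add_one {τ : ℝ} (h0 : 0 < τ) (h1 : τ < 1) :
    IntegrableOn (fun t : ℝ => t ^ (τ - 1) / (t + 1)) (Ioi 0) := by
  have h := Real.integrableOn_rpowIntegrand₀₁_Ioi (p := τ) (x := 1) ⟨h0, h1⟩ zero_le_one
  refine h.congr_fun (fun t ht => ?_) measurableSet_Ioi
  simp [Real.rpowIntegrand₀₁_eq_pow_div (p := τ) ⟨h0, h1⟩ (le_of_lt ht) zero_le_one]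

/-- Scaling `t ↦ x t` determines the Stieltjes integral on the positive half-line up to its value
at `1`. -/
lemma integral_rpow_div_add_of_pos {τ x : ℝ} (h0 : 0 < τ) (h1 : τ < 1) (hx : 0 < x) :
    ∫ t in Ioi (0 : ℝ), t ^ (τ - 1) / (t + x)
      = x ^ (τ - 1) * ∫ t in Ioi (0 : ℝ), t ^ (τ - 1) / (t + 1) := by
  have h := Real.integral_rpowIntegrand₀₁_eq_rpow_mul_const (p := τ) ⟨h0, h1⟩ hx.le
  have e : ∀ y : ℝ, 0 < y → ∫ t in Ioi (0 : ℝ), Real.rpowIntegrand₀₁ τ t y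
      = y * ∫ t in Ioi (0 : ℝ), t ^ (τ - 1) / (t + y) := by
    intro y hy
    rw [← integral_const_mul]
    refine setIntegral_congr_fun measurableSet_Ioi fun t ht => ?_
    rw [Real.rpowIntegrand₀₁_eq_pow_div (p := τ) ⟨h0, h1⟩ (le_of_lt ht) hy.le]
    ring
  rw [e x hx, e 1 one_pos, one_mul] at h
  rw [Real.rpow_sub_one hx.ne', div_mul_eq_mul_div, ← h]
  field_simp

/-- Fubini applied to `t ^ (τ - 1) * exp (-(t + 1) s)` on the positive quadrant. -/
lemma integral_rpow_div_add_one {τ : ℝ} (h0 : 0 < τ) (h1 : τ < 1) :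
    ∫ t in Ioi (0 : ℝ), t ^ (τ - 1) / (t + 1) = Real.pi / Real.sin (Real.pi * τ) := by
  have inner : ∀ t : ℝ, 0 < t →
      ∫ s in Ioi (0 : ℝ), t ^ (τ - 1) * Real.exp (-(t + 1) * s) = t ^ (τ - 1) / (t + 1) := by
    intro t ht
    rw [integral_const_mul, integral_exp_mul_Ioi (by linarith)]
    simp [div_eq_mul_inv, ← inv_neg]
  have hint : Integrable (Function.uncurry fun t s : ℝ => t ^ (τ - 1) * Real.exp (-(t + 1) * s))
      ((volume.restrict (Ioi 0)).prod (volume.restrict (Ioi 0))) := by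
    rw [integrable_prod_iff]
    · constructor
      · filter_upwards [ae_restrict_mem measurableSet_Ioi] with t ht
        have ht : 0 < t := ht
        have hneg : -(t + 1) < 0 := by linarith
        exact (integrableOn_exp_mul_Ioi hneg 0).const_mul (t ^ (τ - 1))
      · refine (integrableOn_rpow_div_add_one h0 h1).congr_fun (fun t ht => ?_) measurableSet_Ioi
        have ht : 0 < t := ht
        simp only [Function.uncurry]
        rw [← inner t ht]
        refine integral_congr_ae (Eventually.of_forall fun s => ?_)
        simp only
        rw [Real.norm_of_nonneg (by positivity)]
    · exact Measurable.aestronglyMeasurable (by unfold Function.uncurry; fun_prop)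
  calc ∫ t in Ioi (0 : ℝ), t ^ (τ - 1) / (t + 1)
      = ∫ t in Ioi (0 : ℝ), ∫ s in Ioi (0 : ℝ), t ^ (τ - 1) * Real.exp (-(t + 1) * s) :=
        setIntegral_congr_fun measurableSet_Ioi fun t ht => (inner t ht).symm
    _ = ∫ s in Ioi (0 : ℝ), ∫ t in Ioi (0 : ℝ), t ^ (τ - 1) * Real.exp (-(t + 1) * s) :=
        integral_integral_swap hint
    _ = ∫ s in Ioi (0 : ℝ), Real.Gamma τ * (s ^ ((1 - τ) - 1) * Real.exp (-(1 * s))) := by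
        refine setIntegral_congr_fun measurableSet_Ioi fun s hs => ?_
        have hs : 0 < s := hs
        have e : ∀ t : ℝ, t ^ (τ - 1) * Real.exp (-(t + 1) * s)
            = Real.exp (-s) * (t ^ (τ - 1) * Real.exp (-(s * t))) := by
          intro t
          rw [mul_left_comm, ← Real.exp_add]
          ring_nf
        simp only [e]
        rw [integral_const_mul, Real.integral_rpow_mul_exp_neg_mul_Ioi h0 hs, one_div,
          Real.inv_rpow hs.le, ← Real.rpow_neg hs.le]
        ring_nf
    _ = Real.pi / Real.sin (Real.pi * τ) := by
        rw [integral_const_mul, Real.integral_rpow_mul_exp_neg_mul_Ioi (by linarith) one_pos,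
          ← Real.Gamma_mul_Gamma_one_sub]
        simp

/-- On a small ball inside the slit plane, `‖t + z‖` is bounded below by a multiple of `1 + t`,
uniformly in `t > 0`. -/
lemma exists_one_add_le_mul_norm {z₀ : ℂ} (hz : z₀ ∈ slitPlane) :
    ∃ ε > 0, ∃ K > 0, ∀ z ∈ Metric.ball z₀ ε, ∀ t : ℝ, 0 < t → 1 + t ≤ K * ‖(t : ℂ) + z‖ := by
  obtain ⟨d, hd, hsub⟩ := Metric.isOpen_iff.1 isOpen_slitPlane z₀ hz
  refine ⟨d / 2, by positivity, 1 + (1 + (‖z₀‖ + d / 2)) / (d / 2), by positivity, ?_⟩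
  intro z hzb t ht
  rw [mem_ball_iff_norm] at hzb
  -- The point `-t` lies outside the ball of radius `d` about `z₀`.
  have hd0 : d ≤ ‖(t : ℂ) + z₀‖ := by
    by_contra! hlt
    have hm : (-(t : ℂ)) ∈ slitPlane := by
      apply hsub
      rwa [mem_ball_iff_norm, ← norm_neg, show -(-(t : ℂ) - z₀) = t + z₀ by ring]
    rw [mem_slitPlane_iff] at hm
    simp at hm
    linarith
  have ha : d / 2 ≤ ‖(t : ℂ) + z‖ := by
    have := norm_sub_norm_le ((t : ℂ) + z₀) ((t : ℂ) + z)
    rw [show (t : ℂ) + z₀ - (t + z) = -(z - z₀) by ring, norm_neg] at this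
    linarith
  have hb : t - (‖z₀‖ + d / 2) ≤ ‖(t : ℂ) + z‖ := by
    have h1 := norm_sub_norm_le (t : ℂ) (-z)
    rw [sub_neg_eq_add, norm_neg, Complex.norm_real, Real.norm_of_nonneg ht.le] at h1
    have h2 := norm_sub_norm_le z z₀
    linarith
  have hc : 1 + (‖z₀‖ + d / 2) ≤ (1 + (‖z₀‖ + d / 2)) / (d / 2) * ‖(t : ℂ) + z‖ := by
    rw [div_mul_eq_mul_div, le_div_iff₀ (by positivity)]
    exact mul_le_mul_of_nonneg_left ha (by positivity)
  linarith

lemma integrableOn_rpow_div_add {τ : ℝ} (h0 : 0 < τ) (h1 : τ < 1) {z : ℂ} (hz : z ∈ slitPlane) :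
    IntegrableOn (fun t : ℝ => ((t ^ (τ - 1) : ℝ) : ℂ) / (t + z)) (Ioi 0) := by
  obtain ⟨ε, hε, K, hK, hb⟩ := exists_one_add_le_mul_norm hz
  refine Integrable.mono' ((integrableOn_rpow_div_add_one h0 h1).const_mul K)
    (Measurable.aestronglyMeasurable (by fun_prop)) ?_
  filter_upwards [ae_restrict_mem measurableSet_Ioi] with t ht
  have ht : 0 < t := ht
  have h := hb z (Metric.mem_ball_self hε) t ht
  have hn : 0 < ‖(t : ℂ) + z‖ := pos_of_mul_pos_right (by linarith) hK.le
  rw [norm_div, Complex.norm_real, Real.norm_of_nonneg (by positivity), mul_div_assoc',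
    div_le_div_iff₀ hn (by positivity)]
  have := mul_le_mul_of_nonneg_left h (show 0 ≤ t ^ (τ - 1) by positivity)
  linarith

lemma differentiableOn_integral_rpow_div_add {τ : ℝ} (h0 : 0 < τ) (h1 : τ < 1) :
    DifferentiableOn ℂ (fun z : ℂ => ∫ t in Ioi (0 : ℝ), ((t ^ (τ - 1) : ℝ) : ℂ) / (t + z))
      slitPlane := by
  intro z₀ hz
  obtain ⟨ε, hε, K, hK, hb⟩ := exists_one_add_le_mul_norm hz
  refine DifferentiableAt.differentiableWithinAt ?_
  refine (hasDerivAt_integral_of_dominated_loc_of_deriv_le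
    (F := fun (z : ℂ) (t : ℝ) => ((t ^ (τ - 1) : ℝ) : ℂ) / (t + z))
    (F' := fun (z : ℂ) (t : ℝ) => -((t ^ (τ - 1) : ℝ) : ℂ) / (t + z) ^ 2)
    (bound := fun t : ℝ => K ^ 2 * (t ^ (τ - 1) / (t + 1)))
    (Metric.ball_mem_nhds z₀ hε) ?_ (integrableOn_rpow_div_add h0 h1 hz) ?_ ?_ ?_
    ?_).2.differentiableAt
  · exact Eventually.of_forall fun z => Measurable.aestronglyMeasurable (by fun_prop)
  · exact Measurable.aestronglyMeasurable (by fun_prop)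
  · filter_upwards [ae_restrict_mem measurableSet_Ioi] with t ht z hzb
    have ht : 0 < t := ht
    have h := hb z hzb t ht
    have hn : 0 < ‖(t : ℂ) + z‖ := pos_of_mul_pos_right (by linarith) hK.le
    rw [norm_div, norm_neg, norm_pow, Complex.norm_real, Real.norm_of_nonneg (by positivity),
      mul_div_assoc', div_le_div_iff₀ (by positivity) (by positivity)]
    have h2 : t + 1 ≤ K ^ 2 * ‖(t : ℂ) + z‖ ^ 2 := by
      rw [← mul_pow]
      nlinarith
    have := mul_le_mul_of_nonneg_left h2 (show 0 ≤ t ^ (τ - 1) by positivity)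
    linarith
  · exact (integrableOn_rpow_div_add_one h0 h1).const_mul _
  · filter_upwards [ae_restrict_mem measurableSet_Ioi] with t ht z hzb
    have ht : 0 < t := ht
    have h := hb z hzb t ht
    have hn : 0 < ‖(t : ℂ) + z‖ := pos_of_mul_pos_right (by linarith) hK.le
    have := (hasDerivAt_const z ((t ^ (τ - 1) : ℝ) : ℂ)).div
      ((hasDerivAt_id z).const_add (t : ℂ)) (norm_pos_iff.1 hn)
    simpa [Pi.div_def] using! this

/-- Stieltjes' formula on the slit plane. -/
lemma integral_rpow_div_add_cpow {τ : ℝ} (h0 : 0 < τ) (h1 : τ < 1) {z : ℂ}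
    (hz : z ∈ slitPlane) :
    ∫ t in Ioi (0 : ℝ), ((t ^ (τ - 1) : ℝ) : ℂ) / (t + z)
      = ((Real.pi / Real.sin (Real.pi * τ) : ℝ) : ℂ) * z ^ ((τ : ℂ) - 1) := by
  have hg : DifferentiableOn ℂ
      (fun z : ℂ => ((Real.pi / Real.sin (Real.pi * τ) : ℝ) : ℂ) * z ^ ((τ : ℂ) - 1)) slitPlane :=
    fun w hw => ((differentiableAt_id.cpow_const hw).const_mul _).differentiableWithinAt
  refine AnalyticOnNhd.eqOn_of_preconnected_of_frequently_eq (z₀ := 1)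
    ((differentiableOn_integral_rpow_div_add h0 h1).analyticOnNhd isOpen_slitPlane)
    (hg.analyticOnNhd isOpen_slitPlane)
    (starConvex_one_slitPlane.isPathConnected one_mem_slitPlane).isConnected.isPreconnected
    one_mem_slitPlane ?_ hz
  have hreal : ∀ x : ℝ, 0 < x →
      ∫ t in Ioi (0 : ℝ), ((t ^ (τ - 1) : ℝ) : ℂ) / (t + (x : ℂ))
        = ((Real.pi / Real.sin (Real.pi * τ) : ℝ) : ℂ) * (x : ℂ) ^ ((τ : ℂ) - 1) := by
    intro x hx
    have := integral_rpow_div_add_of_pos h0 h1 hx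
    rw [integral_rpow_div_add_one h0 h1] at this
    rw [← ofReal_one, ← ofReal_sub, ← ofReal_cpow hx.le, ← ofReal_mul,
      mul_comm _ (x ^ (τ - 1)), ← this]
    refine Eq.trans ?_ integral_ofReal
    simp
  -- The positive reals accumulate at `1`.
  have ht : Tendsto (fun x : ℝ => (x : ℂ)) (𝓝[>] 1) (𝓝[≠] 1) := by
    refine tendsto_nhdsWithin_iff.2 ⟨?_, ?_⟩
    · have : Tendsto (fun x : ℝ => (x : ℂ)) (𝓝 1) (𝓝 ((1 : ℝ) : ℂ)) :=
        continuous_ofReal.tendsto 1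
      rw [ofReal_one] at this
      exact this.mono_left nhdsWithin_le_nhds
    · filter_upwards [self_mem_nhdsWithin] with x hx
      have hx : 1 < x := hx
      simpa using hx.ne'
  refine ht.frequently (Eventually.frequently ?_)
  filter_upwards [self_mem_nhdsWithin] with x hx
  have hx : 1 < x := hx
  exact hreal x (by linarith)

/-- The substitution `t = ς²`. -/
lemma integral_abs_rpow_div (τ ω lam : ℝ) :
    ∫ ς : ℝ, |ς| ^ (2 * τ - 1) / (lam ^ 2 + (ω + ς ^ 2) ^ 2)
      = ∫ t in Ioi (0 : ℝ), t ^ (τ - 1) / (lam ^ 2 + (ω + t) ^ 2) := by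
  have h := integral_comp_abs (f := fun ς : ℝ => ς ^ (2 * τ - 1) / (lam ^ 2 + (ω + ς ^ 2) ^ 2))
  simp only [sq_abs] at h
  rw [h, ← integral_comp_rpow_Ioi_of_pos (p := 2)
    (g := fun t : ℝ => t ^ (τ - 1) / (lam ^ 2 + (ω + t) ^ 2)) two_pos, ← integral_const_mul]
  refine setIntegral_congr_fun measurableSet_Ioi fun s hs => ?_
  have hs : 0 < s := hs
  have e : s ^ (2 * τ - 1) = s * (s ^ (2 : ℕ)) ^ (τ - 1) := by
    rw [← Real.rpow_natCast s 2, ← Real.rpow_mul hs.le]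
    conv_rhs => enter [1]; rw [← Real.rpow_one s]
    rw [← Real.rpow_add hs]
    congr 1
    push_cast
    ring
  simp only [Real.rpow_two, smul_eq_mul, e]
  rw [show (2 : ℝ) - 1 = 1 by norm_num, Real.rpow_one]
  ring

/-- For `0 < τ < 1`, `ω ≥ 0` and real `λ ≠ 0`, the real part of `i(iλ+ω)^{τ−1}`
(principal branch) is `(sin(τπ)/π)·λ·∫_ℝ |ς|^{2τ−1}/(λ² + (ω+ς²)²) dς`; in particular
`λ·Re(i(iλ+ω)^{τ−1}) > 0`. -/
theorem re_I_mul_cpow_pos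
    (τ ω lam : ℝ) (hτ0 : 0 < τ) (hτ1 : τ < 1) (hω : 0 ≤ ω) (hlam : lam ≠ 0) :
    (Complex.I * (Complex.I * lam + ω) ^ ((τ : ℂ) - 1)).re
        = (Real.sin (τ * Real.pi) / Real.pi) * lam *
            ∫ ς : ℝ, |ς| ^ (2 * τ - 1) / (lam ^ 2 + (ω + ς ^ 2) ^ 2) ∧
    0 < lam * (Complex.I * (Complex.I * lam + ω) ^ ((τ : ℂ) - 1)).re := by
  have hz : Complex.I * lam + ω ∈ slitPlane := by
    rw [mem_slitPlane_iff]
    right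
    simpa using hlam
  have hsin : 0 < Real.sin (τ * Real.pi) :=
    Real.sin_pos_of_pos_of_lt_pi (by positivity) (by nlinarith [Real.pi_pos])
  have hlam2 : 0 < lam ^ 2 := by positivity
  have hpt : ∀ t : ℝ, (Complex.I * (((t ^ (τ - 1) : ℝ) : ℂ) / (t + (Complex.I * lam + ω)))).re
      = lam * (t ^ (τ - 1) / (lam ^ 2 + (ω + t) ^ 2)) := by
    intro t
    rw [I_mul_re, div_im]
    simp [normSq_apply]
    ring
  have hi := (integrableOn_rpow_div_add hτ0 hτ1 hz).const_mul Complex.I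
  have hre := integral_re hi
  simp only [RCLike.re_to_complex, hpt] at hre
  rw [integral_const_mul, integral_const_mul, integral_rpow_div_add_cpow hτ0 hτ1 hz,
    mul_left_comm, re_ofReal_mul, mul_comm Real.pi τ] at hre
  have hmain : (Complex.I * (Complex.I * lam + ω) ^ ((τ : ℂ) - 1)).re
      = (Real.sin (τ * Real.pi) / Real.pi) * lam *
          ∫ t in Ioi (0 : ℝ), t ^ (τ - 1) / (lam ^ 2 + (ω + t) ^ 2) := by
    rw [mul_assoc, hre]
    field_simp
  have hint : IntegrableOn (fun t : ℝ => t ^ (τ - 1) / (lam ^ 2 + (ω + t) ^ 2)) (Ioi 0) := by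
    have := hi.re.const_mul lam⁻¹
    simp only [RCLike.re_to_complex, hpt, inv_mul_cancel_left₀ hlam] at this
    exact this
  have hpos : 0 < ∫ t in Ioi (0 : ℝ), t ^ (τ - 1) / (lam ^ 2 + (ω + t) ^ 2) := by
    have hp : ∀ t ∈ Ioi (0 : ℝ), 0 < t ^ (τ - 1) / (lam ^ 2 + (ω + t) ^ 2) := by
      intro t ht
      have ht : 0 < t := ht
      positivity
    have hsupp : Ioi (0 : ℝ) ⊆
        Function.support fun t : ℝ => t ^ (τ - 1) / (lam ^ 2 + (ω + t) ^ 2) :=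
      fun t ht => (hp t ht).ne'
    rw [setIntegral_pos_iff_support_of_nonneg_ae _ hint]
    · rw [inter_eq_self_of_subset_right hsupp]
      simp
    · filter_upwards [ae_restrict_mem measurableSet_Ioi] with t ht
      exact (hp t ht).le
  refine ⟨by rw [integral_abs_rpow_div, hmain], ?_⟩
  rw [hmain, show ∀ a b c : ℝ, a * (b * a * c) = a ^ 2 * (b * c) by intros; ring]
  have := Real.pi_pos
  positivity
end

section
/- Assume a : [0,1] → ℝ is continuous on [0,1] and C¹ on (0,1], with a(x) > 0 for x ∈ (0,1], a(0) = 0, and m_a := sup_{0<x≤1} x·|a'(x)|/a(x) < 2. Then there exists α₀ > 0, depending only on a, with the following property: for every real α with 0 < |α| < α₀, every real λ ≠ 0, and every pair of complex-valued functions u, v ∈ H²_a(0,1) satisfying on (0,1) the system λ²u + (a u')' − α v = 0 and λ²v + (a v')' − α u = 0, with boundary conditions u(1) = 0, u'(1) = 0, v(1) = 0, and additionally u(0) = v(0) = 0 if m_a ∈ [0,1), while (a u')(0) = (a v')(0) = 0 (as limits as x → 0⁺) if m_a ∈ [1,2), one has u ≡ 0 and v ≡ 0 on (0,1]. -/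
/-!
The proof is a multiplier argument arranged so that no integration is needed: a single function
`Ψ` on `(0,1]` is shown to be monotone, zero at `1`, and asymptotically nonnegative at `0`.
Write `p = a u'` and `q = a v'`. The system has real coefficients, so the real and imaginary parts
can be treated separately, and for real `u`, `v` one sets

`Ψ = x p² / a + λ² x u² + p u + 6|α| x u² + β (p v - q u)`,  `β = 2|α| / α`.

The first two terms are the multiplier `x u'`, the third is the energy identity, the fourth is a
Hardy inequality, and the last one (the Wronskian-like expression, with derivative `α (v² - u²)`)
trades `u²` for `v²`. The `λ²` contributions cancel in `Ψ'`, and since `x a' ≤ m_a a` and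
`x² a(1) ≤ a(x)`, one gets `Ψ' ≥ (|α|/2) (u² + v²)` as soon as `|α| < (2 - m_a) a(1) / 13`.
The boundary conditions at `1` give `Ψ(1) = 0`. Near `0` every term except `p u` and `p v - q u` is
nonnegative, and these tend to zero along a sequence (`cross_terms_small`): if `m_a < 1` because
`p`, `q` are bounded and `u`, `v → 0`; if `m_a ≥ 1` because `p`, `q = O(√x)`, while `x (|u|² + |v|²)`
is arbitrarily small infinitely often as `u`, `v ∈ L²`. Hence `Ψ = 0`, so `Ψ' = 0` and `u = v = 0`
(`real_part_trivial`).
-/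


open MeasureTheory Set Filter

/-! ### The monotone functional -/

/-- The uniqueness statement for real solutions, written as a first order system in
`u`, `v`, `p = a u'`, `q = a v'`. The behaviour at `0` enters only through `hbd`: the products
`p u`, `p v`, `q u` are small at points arbitrarily close to `0`. -/
lemma real_part_trivial
    (a a' : ℝ → ℝ) (ma : ℝ)
    (ha_deriv : ∀ x ∈ Ioc (0:ℝ) 1, HasDerivAt a (a' x) x)
    (ha_pos : ∀ x ∈ Ioc (0:ℝ) 1, 0 < a x)
    (hma : ∀ x ∈ Ioc (0:ℝ) 1, x * a' x ≤ ma * a x)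
    (hma_lt : ma < 2) (α lam : ℝ) (hα : 0 < |α|) (hα' : |α| < (2 - ma) * a 1 / 13)
    (u v p q : ℝ → ℝ)
    (huc : ContinuousOn u (Ioc 0 1)) (hvc : ContinuousOn v (Ioc 0 1))
    (hpc : ContinuousOn p (Ioc 0 1)) (hqc : ContinuousOn q (Ioc 0 1))
    (hu : ∀ x ∈ Ioo (0:ℝ) 1, HasDerivAt u (p x / a x) x)
    (hv : ∀ x ∈ Ioo (0:ℝ) 1, HasDerivAt v (q x / a x) x)
    (hp : ∀ x ∈ Ioo (0:ℝ) 1, HasDerivAt p (α * v x - lam ^ 2 * u x) x)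
    (hq : ∀ x ∈ Ioo (0:ℝ) 1, HasDerivAt q (α * u x - lam ^ 2 * v x) x)
    (hu1 : u 1 = 0) (hv1 : v 1 = 0) (hp1 : p 1 = 0)
    (hbd : ∀ δ > 0, ∀ η > 0, ∃ ε, 0 < ε ∧ ε < η ∧ |p ε * u ε| < δ ∧ |p ε * v ε| < δ ∧
      |q ε * u ε| < δ) :
    ∀ x ∈ Ioc (0:ℝ) 1, u x = 0 ∧ v x = 0 := by
  have hac : ContinuousOn a (Ioc 0 1) := fun x hx => (ha_deriv x hx).continuousAt.continuousWithinAt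
  have ha1 : 0 < a 1 := ha_pos 1 (by simp)
  have hα0 : α ≠ 0 := abs_pos.mp hα
  -- `x² / a` is nondecreasing because `x a' ≤ 2 a`.
  have hx2 : ∀ x ∈ Ioc (0:ℝ) 1, x ^ 2 * a 1 ≤ a x := by
    have hd : ∀ x ∈ Ioc (0:ℝ) 1,
        HasDerivAt (fun x => x ^ 2 / a x) ((2 * x * a x - x ^ 2 * a' x) / a x ^ 2) x := by
      intro x hx
      have := ((hasDerivAt_id x).pow 2).div (ha_deriv x hx) (ha_pos x hx).ne'
      refine this.congr_deriv ?_
      simp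
    have hmono : MonotoneOn (fun x => x ^ 2 / a x) (Ioc 0 1) := by
      apply monotoneOn_of_hasDerivWithinAt_nonneg (convex_Ioc 0 1)
        (f' := fun x => (2 * x * a x - x ^ 2 * a' x) / a x ^ 2)
      · exact fun x hx => (hd x hx).continuousAt.continuousWithinAt
      · intro x hx
        exact (hd x (interior_subset hx)).hasDerivWithinAt
      · intro x hx
        have hx' := interior_subset hx
        have h1 := hma x hx'
        have h2 := ha_pos x hx'
        have h3 : 0 ≤ x * (2 * a x - x * a' x) := mul_nonneg hx'.1.le (by nlinarith)
        apply div_nonneg _ (by positivity)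
        linarith
    intro x hx
    have := hmono hx (by simp : (1:ℝ) ∈ Ioc (0:ℝ) 1) hx.2
    simp only [one_pow] at this
    rw [div_le_div_iff₀ (ha_pos x hx) ha1] at this
    linarith
  set β : ℝ := 2 * |α| / α with hβ
  have hβα : β * α = 2 * |α| := by rw [hβ]; field_simp
  set Ψ : ℝ → ℝ := fun x => x * p x ^ 2 / a x + lam ^ 2 * x * u x ^ 2 + p x * u x
    + 6 * |α| * (x * u x ^ 2) + β * (p x * v x - q x * u x) with hΨ
  set Ψ' : ℝ → ℝ := fun x => (2 * a x - x * a' x) * (p x / a x) ^ 2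
    + 2 * α * x * v x * (p x / a x) + α * v x * u x
    + 6 * |α| * (u x ^ 2 + 2 * x * u x * (p x / a x))
    + 2 * |α| * (v x ^ 2 - u x ^ 2) with hΨ'
  have hΨd : ∀ x ∈ Ioo (0:ℝ) 1, HasDerivAt Ψ (Ψ' x) x := by
    intro x hx
    have hx' : x ∈ Ioc (0:ℝ) 1 := ⟨hx.1, hx.2.le⟩
    have hax := (ha_pos x hx').ne'
    have dX := hasDerivAt_id x
    have dA := ha_deriv x hx'
    have dU := hu x hx
    have dV := hv x hx
    have dP := hp x hx
    have dQ := hq x hx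
    have key := (((((dX.mul (dP.pow 2)).div dA hax).add
      ((dX.const_mul (lam ^ 2)).mul (dU.pow 2))).add (dP.mul dU)).add
      ((dX.mul (dU.pow 2)).const_mul (6 * |α|))).add
      (((dP.mul dV).sub (dQ.mul dU)).const_mul β)
    refine HasDerivAt.congr_deriv (f := Ψ) key ?_
    simp only [hΨ', ← hβα, id, Pi.pow_apply, Pi.mul_apply]
    field_simp
    push_cast
    ring
  have hlow : ∀ x ∈ Ioo (0:ℝ) 1, |α| / 2 * (u x ^ 2 + v x ^ 2) ≤ Ψ' x := by
    intro x hx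
    have hx' : x ∈ Ioc (0:ℝ) 1 := ⟨hx.1, hx.2.le⟩
    have hax := ha_pos x hx'
    simp only [hΨ']
    generalize p x / a x = z
    set B := a x * z ^ 2 / a 1 with hB
    have hB0 : 0 ≤ B := by positivity
    have e1 : (2 - ma) * a 1 * B ≤ (2 * a x - x * a' x) * z ^ 2 := by
      have : (2 - ma) * a 1 * B = (2 - ma) * a x * z ^ 2 := by rw [hB]; field_simp
      rw [this]
      have := hma x hx'
      gcongr
      linarith
    have e2 : (x * z) ^ 2 ≤ B := by
      rw [hB, le_div_iff₀ ha1]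
      have := hx2 x hx'
      nlinarith [sq_nonneg z]
    have e3 : 13 * |α| * B ≤ (2 - ma) * a 1 * B :=
      mul_le_mul_of_nonneg_right (by linarith) hB0
    have e4 : -(|α| * (v x ^ 2 + (x * z) ^ 2)) ≤ 2 * α * x * v x * z := by
      rcases abs_cases α with ⟨h, h'⟩ | ⟨h, h'⟩ <;> rw [h]
      · nlinarith [mul_nonneg h' (sq_nonneg (v x + x * z))]
      · nlinarith [mul_nonneg (neg_nonneg.2 h'.le) (sq_nonneg (v x - x * z))]
    have e5 : -(|α| / 2 * (v x ^ 2 + u x ^ 2)) ≤ α * v x * u x := by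
      rcases abs_cases α with ⟨h, h'⟩ | ⟨h, h'⟩ <;> rw [h]
      · nlinarith [mul_nonneg h' (sq_nonneg (v x + u x))]
      · nlinarith [mul_nonneg (neg_nonneg.2 h'.le) (sq_nonneg (v x - u x))]
    have e6 : |α| * (-(u x ^ 2 / 2) - 2 * (x * z) ^ 2) ≤ |α| * (2 * x * u x * z) := by
      gcongr
      nlinarith [sq_nonneg (u x + 2 * (x * z))]
    have e7 := mul_le_mul_of_nonneg_left e2 hα.le
    nlinarith
  have hΨc : ContinuousOn Ψ (Ioc 0 1) := by
    have hne : ∀ x ∈ Ioc (0:ℝ) 1, a x ≠ 0 := fun x hx => (ha_pos x hx).ne'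
    simp only [hΨ]
    fun_prop (disch := assumption)
  have hmono : MonotoneOn Ψ (Ioc 0 1) := by
    apply monotoneOn_of_hasDerivWithinAt_nonneg (convex_Ioc 0 1) (f' := Ψ') hΨc
    · intro x hx
      rw [interior_Ioc] at hx
      exact (hΨd x hx).hasDerivWithinAt
    · intro x hx
      rw [interior_Ioc] at hx
      exact le_trans (by positivity) (hlow x hx)
  have hΨ1 : Ψ 1 = 0 := by simp [hΨ, hu1, hv1, hp1]
  have hΨ0 : ∀ x ∈ Ioc (0:ℝ) 1, Ψ x = 0 := by
    intro x hx
    apply le_antisymm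
    · rw [← hΨ1]
      exact hmono hx (by simp) hx.2
    · -- Near `0` only the cross terms of `Ψ` can be negative, and these are small infinitely often.
      apply le_of_forall_pos_le_add
      intro δ hδ
      obtain ⟨ε, h0, h1, b1, b2, b3⟩ := hbd (δ / (1 + 2 * |β|)) (by positivity) x hx.1
      have hε : ε ∈ Ioc (0:ℝ) 1 := ⟨h0, h1.le.trans hx.2⟩
      have hm := hmono hε hx h1.le
      have haε := ha_pos ε hε
      have n1 : 0 ≤ ε * p ε ^ 2 / a ε := by positivity
      have n2 : 0 ≤ lam ^ 2 * ε * u ε ^ 2 := by positivity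
      have n3 : 0 ≤ 6 * |α| * (ε * u ε ^ 2) := by positivity
      have n4 : -(|β| * (2 * (δ / (1 + 2 * |β|)))) ≤ β * (p ε * v ε - q ε * u ε) := by
        apply neg_le_of_abs_le
        rw [abs_mul]
        gcongr
        exact (abs_sub _ _).trans (by linarith)
      have n5 := neg_le_of_abs_le b1.le
      have n6 : δ / (1 + 2 * |β|) + |β| * (2 * (δ / (1 + 2 * |β|))) = δ := by
        field_simp
      simp only [hΨ] at hm ⊢
      linarith
  have hzero : ∀ x ∈ Ioo (0:ℝ) 1, u x = 0 ∧ v x = 0 := by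
    intro x hx
    have hd : HasDerivAt Ψ 0 x := by
      apply (hasDerivAt_const x (0:ℝ)).congr_of_eventuallyEq
      filter_upwards [Ioo_mem_nhds hx.1 hx.2] with y hy
      exact hΨ0 y ⟨hy.1, hy.2.le⟩
    have h0 := hlow x hx
    rw [(hΨd x hx).unique hd] at h0
    have h1 : u x ^ 2 + v x ^ 2 ≤ 0 := by
      by_contra! h
      have := mul_pos (half_pos hα) h
      linarith
    constructor <;> nlinarith [sq_nonneg (u x), sq_nonneg (v x)]
  intro x hx
  rcases hx.2.lt_or_eq with h | h
  · exact hzero x ⟨hx.1, h⟩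
  · rw [h]; exact ⟨hu1, hv1⟩

/-! ### Regularity and growth of primitives -/

/-- Regularity bootstrap: a locally absolutely continuous function on `(0,1]` is continuous there,
and it is classically differentiable wherever its density is continuous. -/
lemma primitive_regularity {f g : ℝ → ℂ}
    (hg : ∀ x ∈ Ioc (0:ℝ) 1, ∀ y ∈ Ioc (0:ℝ) 1, IntervalIntegrable g volume x y)
    (hf : ∀ x ∈ Ioc (0:ℝ) 1, ∀ y ∈ Ioc (0:ℝ) 1, f y - f x = ∫ t in x..y, g t) :
    ContinuousOn f (Ioc 0 1) ∧
      (ContinuousOn g (Ioo 0 1) → ∀ x ∈ Ioo (0:ℝ) 1, HasDerivAt f (g x) x) := by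
  constructor
  · intro x hx
    have hx2 : x / 2 ∈ Ioc (0:ℝ) 1 := ⟨by linarith [hx.1], by linarith [hx.1, hx.2]⟩
    have hc : ContinuousOn (fun y => f (x / 2) + ∫ t in (x / 2)..y, g t) (Icc (x / 2) 1) := by
      apply continuousOn_const.add
      have := intervalIntegral.continuousOn_primitive_interval (μ := volume) (f := g)
        (a := x / 2) (b := 1)
      rw [uIcc_of_le hx2.2] at this
      exact this ((intervalIntegrable_iff_integrableOn_Icc_of_le hx2.2).1 (hg _ hx2 _ (by simp)))
    have hc' : ContinuousOn f (Icc (x / 2) 1) := by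
      refine hc.congr fun y hy => ?_
      have := hf _ hx2 y ⟨hx2.1.trans_le hy.1, hy.2⟩
      simp only [← this]; ring
    apply (hc' x ⟨by linarith [hx.1], hx.2⟩).mono_of_mem_nhdsWithin
    have : Ioi (x / 2) ∈ nhdsWithin x (Ioc 0 1) :=
      mem_nhdsWithin_of_mem_nhds (Ioi_mem_nhds (by linarith [hx.1]))
    filter_upwards [this, self_mem_nhdsWithin] with y hy hy'
    exact ⟨le_of_lt hy, hy'.2⟩
  · intro hgc x hx
    have hx' : x ∈ Ioc (0:ℝ) 1 := ⟨hx.1, hx.2.le⟩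
    have hd : HasDerivAt (fun y => ∫ t in x..y, g t) (g x) x := by
      apply intervalIntegral.integral_hasDerivAt_right (hg x hx' x hx')
      · exact hgc.stronglyMeasurableAtFilter isOpen_Ioo x hx
      · exact hgc.continuousAt (Ioo_mem_nhds hx.1 hx.2)
    apply (hd.const_add (f x)).congr_of_eventuallyEq
    filter_upwards [Ioo_mem_nhds hx.1 hx.2] with y hy
    rw [← hf x hx' y ⟨hy.1, hy.2.le⟩]; ring

/-- A parametrised form of Cauchy-Schwarz for the increments of an `H¹` function: the optimal
choice of `s` gives Hölder continuity of exponent `1/2`. -/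
lemma primitive_bound {f g : ℝ → ℂ}
    (hg : ∀ x ∈ Ioc (0:ℝ) 1, ∀ y ∈ Ioc (0:ℝ) 1, IntervalIntegrable g volume x y)
    (hf : ∀ x ∈ Ioc (0:ℝ) 1, ∀ y ∈ Ioc (0:ℝ) 1, f y - f x = ∫ t in x..y, g t)
    (hg2 : IntegrableOn (fun x => ‖g x‖ ^ 2) (Ioo 0 1))
    {x y s : ℝ} (hx : 0 < x) (hxy : x ≤ y) (hy : y ≤ 1) (hs : 0 < s) :
    ‖f y - f x‖ ≤ s * (∫ t in Ioo (0:ℝ) 1, ‖g t‖ ^ 2) + (y - x) / s := by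
  have hx' : x ∈ Ioc (0:ℝ) 1 := ⟨hx, hxy.trans hy⟩
  have hy' : y ∈ Ioc (0:ℝ) 1 := ⟨hx.trans_le hxy, hy⟩
  have hg2' : IntegrableOn (fun x => ‖g x‖ ^ 2) (Ioc 0 1) := by
    rwa [integrableOn_Ioc_iff_integrableOn_Ioo]
  have hsub : Ioc x y ⊆ Ioc 0 1 := Ioc_subset_Ioc hx.le hy
  have hi : IntervalIntegrable (fun t => ‖g t‖ ^ 2) volume x y :=
    (intervalIntegrable_iff_integrableOn_Ioc_of_le hxy).2 (hg2'.mono_set hsub)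
  rw [hf x hx' y hy']
  calc ‖∫ t in x..y, g t‖ ≤ ∫ t in x..y, ‖g t‖ :=
        intervalIntegral.norm_integral_le_integral_norm hxy
    _ ≤ ∫ t in x..y, (s * ‖g t‖ ^ 2 + 1 / s) := by
        apply intervalIntegral.integral_mono_on hxy (hg x hx' y hy').norm
          ((hi.const_mul s).add intervalIntegrable_const)
        intro t _
        have h : s * ‖g t‖ ^ 2 + 1 / s - ‖g t‖
            = ((s * ‖g t‖ - 1 / 2) ^ 2 + 3 / 4) / s := by field_simp; ring
        have : 0 ≤ ((s * ‖g t‖ - 1 / 2) ^ 2 + 3 / 4) / s := by positivity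
        linarith
    _ = s * (∫ t in x..y, ‖g t‖ ^ 2) + (y - x) / s := by
        rw [intervalIntegral.integral_add (hi.const_mul s) intervalIntegrable_const,
          intervalIntegral.integral_const_mul, intervalIntegral.integral_const]
        simp [div_eq_mul_inv]
    _ ≤ _ := by
        gcongr
        rw [intervalIntegral.integral_of_le hxy, ← integral_Ioc_eq_integral_Ioo]
        exact setIntegral_mono_set hg2' (Eventually.of_forall fun t => by positivity)
          hsub.eventuallyLE

/-! ### Boundary terms at the degenerate endpoint -/

/-- Since `1/x` is not integrable at `0`, an integrable `h` cannot satisfy `h x ≥ δ / x` near `0`. -/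
lemma exists_small_mul {h : ℝ → ℝ} (hh : IntegrableOn h (Ioo 0 1))
    {δ η : ℝ} (hδ : 0 < δ) (hη : 0 < η) : ∃ ε, 0 < ε ∧ ε < η ∧ ε < 1 ∧ ε * h ε < δ := by
  by_contra! H
  set c := min η 1 with hc
  have hc0 : 0 < c := by positivity
  have hI : IntegrableOn (fun x : ℝ => x⁻¹) (Ioo 0 c) := by
    have h1 : IntegrableOn (fun x => δ⁻¹ * h x) (Ioo 0 c) :=
      (hh.mono_set (Ioo_subset_Ioo_right (min_le_right _ _))).const_mul _
    apply Integrable.mono' h1 measurable_inv.aestronglyMeasurable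
    filter_upwards [self_mem_ae_restrict measurableSet_Ioo] with x hx
    have := H x hx.1 (hx.2.trans_le (min_le_left _ _)) (hx.2.trans_le (min_le_right _ _))
    have hx0 := hx.1
    rw [Real.norm_of_nonneg (by positivity), inv_mul_eq_div, le_div_iff₀ hδ,
      inv_mul_le_iff₀ hx0]
    exact this
  have h2 := (intervalIntegrable_iff_integrableOn_Ioo_of_le hc0.le).2 hI
  rw [intervalIntegrable_inv_iff] at h2
  rcases h2 with h2 | h2
  · exact hc0.ne h2
  · exact h2 left_mem_uIcc

/-- Either boundary condition at `0` makes the boundary terms of the integrations by parts vanish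
along a sequence tending to `0`. -/
lemma cross_terms_small
    {a : ℝ → ℝ} {ma : ℝ} {u u' wu v v' wv : ℝ → ℂ}
    (hU : MemH2a a u u' wu) (hV : MemH2a a v v' wv)
    (hbc1 : ma < 1 →
      Tendsto u (nhdsWithin 0 (Ioi 0)) (nhds 0) ∧ Tendsto v (nhdsWithin 0 (Ioi 0)) (nhds 0))
    (hbc2 : 1 ≤ ma →
      Tendsto (fun x : ℝ => (a x : ℂ) * u' x) (nhdsWithin 0 (Ioi 0)) (nhds 0) ∧
      Tendsto (fun x : ℝ => (a x : ℂ) * v' x) (nhdsWithin 0 (Ioi 0)) (nhds 0))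
    {δ η : ℝ} (hδ : 0 < δ) (hη : 0 < η) :
    ∃ ε, 0 < ε ∧ ε < η ∧
      (‖(a ε : ℂ) * u' ε‖ + ‖(a ε : ℂ) * v' ε‖) * (‖u ε‖ + ‖v ε‖) < δ := by
  obtain ⟨⟨hu2, -, -, -⟩, -, hwu2, hwui, hwu⟩ := hU
  obtain ⟨⟨hv2, -, -, -⟩, -, hwv2, hwvi, hwv⟩ := hV
  have bu := fun {x y s : ℝ} => primitive_bound (f := fun x => (a x : ℂ) * u' x)
    (x := x) (y := y) (s := s) hwui hwu hwu2
  have bv := fun {x y s : ℝ} => primitive_bound (f := fun x => (a x : ℂ) * v' x)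
    (x := x) (y := y) (s := s) hwvi hwv hwv2
  have hKu : 0 ≤ ∫ t in Ioo (0:ℝ) 1, ‖wu t‖ ^ 2 := integral_nonneg fun t => by positivity
  have hKv : 0 ≤ ∫ t in Ioo (0:ℝ) 1, ‖wv t‖ ^ 2 := integral_nonneg fun t => by positivity
  set Ku := ∫ t in Ioo (0:ℝ) 1, ‖wu t‖ ^ 2
  set Kv := ∫ t in Ioo (0:ℝ) 1, ‖wv t‖ ^ 2
  rcases lt_or_ge ma 1 with hm | hm
  · obtain ⟨tu, tv⟩ := hbc1 hm
    set C := ‖(a 1 : ℂ) * u' 1‖ + ‖(a 1 : ℂ) * v' 1‖ + Ku + Kv + 2 with hC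
    have hCpos : 0 < C := by positivity
    have t0 := tu.norm.add tv.norm
    simp only [norm_zero, add_zero] at t0
    have hev := (t0.eventually (gt_mem_nhds (show 0 < δ / C by positivity))).and
      (Ioo_mem_nhdsGT (show (0:ℝ) < min η 1 by positivity))
    obtain ⟨ε, h1, h2⟩ := hev.exists
    have hε1 : ε ≤ 1 := h2.2.le.trans (min_le_right _ _)
    refine ⟨ε, h2.1, h2.2.trans_le (min_le_left _ _), ?_⟩
    have c1 := bu h2.1 hε1 le_rfl one_pos
    have c2 := bv h2.1 hε1 le_rfl one_pos
    have d1 := norm_sub_norm_le ((a ε : ℂ) * u' ε) ((a 1 : ℂ) * u' 1)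
    have d2 := norm_sub_norm_le ((a ε : ℂ) * v' ε) ((a 1 : ℂ) * v' 1)
    rw [norm_sub_rev] at d1 d2
    have hle : ‖(a ε : ℂ) * u' ε‖ + ‖(a ε : ℂ) * v' ε‖ ≤ C := by
      have := h2.1
      simp only [one_mul, div_one] at c1 c2
      rw [hC]; linarith
    calc _ ≤ C * (‖u ε‖ + ‖v ε‖) := by gcongr
      _ < C * (δ / C) := by gcongr
      _ = δ := by field_simp
  · obtain ⟨tu, tv⟩ := hbc2 hm
    -- Letting the left endpoint tend to `0` and taking `s = √y` gives `a u' = O(√y)`.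
    have key : ∀ (f : ℝ → ℂ) (K : ℝ), Tendsto f (nhdsWithin 0 (Ioi 0)) (nhds 0) →
        (∀ {x y s : ℝ}, 0 < x → x ≤ y → y ≤ 1 → 0 < s → ‖f y - f x‖ ≤ s * K + (y - x) / s) →
        ∀ y, 0 < y → y ≤ 1 → ‖f y‖ ≤ √y * (K + 1) := by
      intro f K tf hb y hy hy1
      have hsy : 0 < √y := Real.sqrt_pos.2 hy
      have t1 : Tendsto (fun x => ‖f y - f x‖) (nhdsWithin 0 (Ioi 0)) (nhds ‖f y‖) := by
        simpa using (tendsto_const_nhds.sub tf).norm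
      apply le_of_tendsto t1
      filter_upwards [Ioo_mem_nhdsGT hy] with x hx
      have h1 := hb hx.1 hx.2.le hy1 hsy
      have h2 : (y - x) / √y ≤ √y := by
        rw [div_le_iff₀ hsy, Real.mul_self_sqrt hy.le]
        linarith [hx.1]
      linarith
    have ku := key _ Ku tu bu
    have kv := key _ Kv tv bv
    set C := Ku + Kv + 2 with hC
    have hCpos : 0 < C := by positivity
    obtain ⟨ε, h0, h1, h2, h3⟩ := exists_small_mul (hu2.add hv2)
      (show 0 < (δ / C) ^ 2 / 2 by positivity) hη
    refine ⟨ε, h0, h1, ?_⟩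
    simp only [Pi.add_apply] at h3
    have hle : ‖(a ε : ℂ) * u' ε‖ + ‖(a ε : ℂ) * v' ε‖ ≤ √ε * C := by
      have := ku ε h0 h2.le
      have := kv ε h0 h2.le
      rw [hC]; linarith
    have hsm : √ε * (‖u ε‖ + ‖v ε‖) < δ / C := by
      apply lt_of_pow_lt_pow_left₀ 2 (by positivity)
      rw [mul_pow, Real.sq_sqrt h0.le]
      nlinarith [mul_nonneg h0.le (sq_nonneg (‖u ε‖ - ‖v ε‖))]
    calc _ ≤ √ε * C * (‖u ε‖ + ‖v ε‖) := by gcongr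
      _ = C * (√ε * (‖u ε‖ + ‖v ε‖)) := by ring
      _ < C * (δ / C) := by gcongr
      _ = δ := by field_simp

/-! ### Reduction of the complex system to real solutions -/

/-- Absence of purely imaginary eigenvalues (case `λ ≠ 0`): for `α` small enough, the only
solution of the coupled degenerate system `λ²u + (au')' − αv = 0`, `λ²v + (av')' − αu = 0`
with the overdetermined boundary conditions `u(1) = u'(1) = v(1) = 0` (and the degenerate
boundary conditions at `0` according to the value of `m_a`) is the trivial one. -/
theorem no_imaginary_eigenvalues
    (a a' : ℝ → ℝ) (ma : ℝ)
    (ha_cont : ContinuousOn a (Icc 0 1))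
    (ha_deriv : ∀ x ∈ Ioc (0:ℝ) 1, HasDerivAt a (a' x) x)
    (ha'_cont : ContinuousOn a' (Ioc 0 1))
    (ha_pos : ∀ x ∈ Ioc (0:ℝ) 1, 0 < a x)
    (ha0 : a 0 = 0)
    (hma : IsLUB {r : ℝ | ∃ x ∈ Ioc (0:ℝ) 1, r = x * |a' x| / a x} ma)
    (hma_lt : ma < 2) :
    ∃ α₀ : ℝ, 0 < α₀ ∧
      ∀ α : ℝ, 0 < |α| → |α| < α₀ →
        ∀ lam : ℝ, lam ≠ 0 →
          ∀ u u' wu v v' wv : ℝ → ℂ,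
            MemH2a a u u' wu → MemH2a a v v' wv →
            (∀ x ∈ Ioo (0:ℝ) 1, (lam : ℂ) ^ 2 * u x + wu x - (α : ℂ) * v x = 0) →
            (∀ x ∈ Ioo (0:ℝ) 1, (lam : ℂ) ^ 2 * v x + wv x - (α : ℂ) * u x = 0) →
            u 1 = 0 → u' 1 = 0 → v 1 = 0 →
            (ma < 1 →
              Tendsto u (nhdsWithin 0 (Ioi 0)) (nhds 0) ∧
              Tendsto v (nhdsWithin 0 (Ioi 0)) (nhds 0)) →
            (1 ≤ ma →
              Tendsto (fun x : ℝ => (a x : ℂ) * u' x) (nhdsWithin 0 (Ioi 0)) (nhds 0) ∧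
              Tendsto (fun x : ℝ => (a x : ℂ) * v' x) (nhdsWithin 0 (Ioi 0)) (nhds 0)) →
            ∀ x ∈ Ioc (0:ℝ) 1, u x = 0 ∧ v x = 0 := by
  have h1mem : (1:ℝ) ∈ Ioc (0:ℝ) 1 := by simp
  have ha1 := ha_pos 1 h1mem
  refine ⟨(2 - ma) * a 1 / 13, by have : 0 < 2 - ma := by linarith
                                  positivity, ?_⟩
  intro α hα hα' lam _ u u' wu v v' wv hU hV equ eqv hu1 hu'1 hv1 hbc1 hbc2
  have hma' : ∀ x ∈ Ioc (0:ℝ) 1, x * a' x ≤ ma * a x := by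
    intro x hx
    have h := hma.1 ⟨x, hx, rfl⟩
    rw [div_le_iff₀ (ha_pos x hx)] at h
    have := mul_le_mul_of_nonneg_left (le_abs_self (a' x)) hx.1.le
    linarith
  have hsmall := fun {δ η : ℝ} => cross_terms_small (δ := δ) (η := η) hU hV hbc1 hbc2
  have hac : ContinuousOn (fun x => (a x : ℂ)) (Ioc 0 1) := fun x hx =>
    (Complex.continuous_ofReal.continuousAt.comp (ha_deriv x hx).continuousAt).continuousWithinAt
  have hane : ∀ x ∈ Ioc (0:ℝ) 1, (a x : ℂ) ≠ 0 := fun x hx => by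
    exact_mod_cast (ha_pos x hx).ne'
  obtain ⟨⟨-, hu'i, hu', -⟩, -, -, hwui, hwu⟩ := hU
  obtain ⟨⟨-, hv'i, hv', -⟩, -, -, hwvi, hwv⟩ := hV
  obtain ⟨huc, hud⟩ := primitive_regularity hu'i hu'
  obtain ⟨hvc, hvd⟩ := primitive_regularity hv'i hv'
  obtain ⟨hpc, hpd⟩ := primitive_regularity (f := fun x => (a x : ℂ) * u' x) hwui hwu
  obtain ⟨hqc, hqd⟩ := primitive_regularity (f := fun x => (a x : ℂ) * v' x) hwvi hwv
  have hsub : Ioo (0:ℝ) 1 ⊆ Ioc 0 1 := Ioo_subset_Ioc_self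
  have hud' := hud (((hpc.div hac hane).congr fun x hx => by
    simp [mul_div_cancel_left₀ _ (hane x hx)]).mono hsub)
  have hvd' := hvd (((hqc.div hac hane).congr fun x hx => by
    simp [mul_div_cancel_left₀ _ (hane x hx)]).mono hsub)
  have hwu_eq : ∀ x ∈ Ioo (0:ℝ) 1, wu x = (α : ℂ) * v x - (lam : ℂ) ^ 2 * u x := fun x hx => by
    linear_combination equ x hx
  have hwv_eq : ∀ x ∈ Ioo (0:ℝ) 1, wv x = (α : ℂ) * u x - (lam : ℂ) ^ 2 * v x := fun x hx => by
    linear_combination eqv x hx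
  have hpd' := hpd ((((continuousOn_const.mul hvc).sub
    (continuousOn_const.mul huc)).mono hsub).congr hwu_eq)
  have hqd' := hqd ((((continuousOn_const.mul huc).sub
    (continuousOn_const.mul hvc)).mono hsub).congr hwv_eq)
  -- The system is real-linear with real coefficients, so a real-linear functional `L`
  -- on `ℂ` (below, the real and the imaginary part) maps solutions to real solutions.
  have main : ∀ L : ℂ →L[ℝ] ℝ, (∀ z, |L z| ≤ ‖z‖) →
      ∀ x ∈ Ioc (0:ℝ) 1, L (u x) = 0 ∧ L (v x) = 0 := by
    intro L hL
    have hLs : ∀ (r : ℝ) (z : ℂ), L ((r : ℂ) * z) = r * L z := fun r z => by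
      rw [← Complex.real_smul, map_smul, smul_eq_mul]
    have hd : ∀ {f : ℝ → ℂ} {f' : ℂ} {x : ℝ}, HasDerivAt f f' x →
        HasDerivAt (fun x => L (f x)) (L f') x := fun h =>
      L.hasFDerivAt.comp_hasDerivAt _ h
    have hLw : ∀ (z w : ℂ), L ((α : ℂ) * z - (lam : ℂ) ^ 2 * w) = α * L z - lam ^ 2 * L w := by
      intro z w
      rw [map_sub, hLs, ← Complex.ofReal_pow, hLs]
    apply real_part_trivial a a' ma ha_deriv ha_pos hma' hma_lt α lam hα hα'
      (fun x => L (u x)) (fun x => L (v x)) (fun x => L ((a x : ℂ) * u' x))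
      (fun x => L ((a x : ℂ) * v' x))
      (L.continuous.comp_continuousOn huc) (L.continuous.comp_continuousOn hvc)
      (L.continuous.comp_continuousOn hpc) (L.continuous.comp_continuousOn hqc)
    · intro x hx
      rw [hLs, mul_div_cancel_left₀ _ (ha_pos x (hsub hx)).ne']
      exact hd (hud' x hx)
    · intro x hx
      rw [hLs, mul_div_cancel_left₀ _ (ha_pos x (hsub hx)).ne']
      exact hd (hvd' x hx)
    · intro x hx
      rw [← hLw, ← hwu_eq x hx]
      exact hd (hpd' x hx)
    · intro x hx
      rw [← hLw, ← hwv_eq x hx]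
      exact hd (hqd' x hx)
    · simp [hu1]
    · simp [hv1]
    · simp [hu'1]
    · intro δ hδ η hη
      obtain ⟨ε, h0, h1, h2⟩ := hsmall hδ hη
      have hb : ∀ z w : ℂ, |L z * L w| ≤ ‖z‖ * ‖w‖ := fun z w => by
        rw [abs_mul]
        exact mul_le_mul (hL z) (hL w) (abs_nonneg _) (norm_nonneg _)
      refine ⟨ε, h0, h1, (hb _ _).trans_lt (lt_of_le_of_lt ?_ h2),
        (hb _ _).trans_lt (lt_of_le_of_lt ?_ h2), (hb _ _).trans_lt (lt_of_le_of_lt ?_ h2)⟩ <;>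
      gcongr <;>
      first
        | exact le_add_of_nonneg_right (norm_nonneg _)
        | exact le_add_of_nonneg_left (norm_nonneg _)
  intro x hx
  have hre := main Complex.reCLM Complex.abs_re_le_norm x hx
  have him := main Complex.imCLM Complex.abs_im_le_norm x hx
  exact ⟨Complex.ext hre.1 him.1, Complex.ext hre.2 him.2⟩
end

section
/- Assume a : [0,1] → ℝ is continuous on [0,1] and C¹ on (0,1], with a(x) > 0 for x ∈ (0,1], a(0) = 0, and m_a := sup_{0<x≤1} x·|a'(x)|/a(x) < 2. Let λ ∈ ℝ, let α ∈ ℝ with α ≠ 0, and let u, v ∈ H²_a(0,1) be complex-valued functions satisfying on (0,1) the system λ²u + (a u')' − α v = 0 and λ²v + (a v')' − α u = 0, with boundary conditions u(1) = v(1) = 0, and additionally u(0) = v(0) = 0 if m_a ∈ [0,1), while (a u')(0) = (a v')(0) = 0 (as limits as x → 0⁺) if m_a ∈ [1,2). Then ∫₀¹ |u(x)|² dx = ∫₀¹ |v(x)|² dx. -/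
/-!
Put `p = a u'`, `q = a v'` and `W = p v̄ - u q̄`. The equations
and `u' = p / a` show that all the weak derivatives are continuous on `(0,1)`, hence classical,
and `W' = α (|v|² - |u|²)` there because the terms `a u' v̄'` cancel. Since `W 1 = 0` and
`u, v ∈ L²`, `W` tends at `0⁺` to `L = α (∫|u|² - ∫|v|²)`, and the point is that `L = 0`.

If `m_a < 1`, then `p, q` are bounded (`IsPrim.norm_le_const`) and `u, v → 0`, so `L = 0`.
If `m_a ≥ 1`, then `p, q → 0` and their derivatives are square integrable, so `|p|, |q| ≤ C √x`
(`IsPrim.norm_le_sqrt`). Hence `|W|² ≤ 2 C² x (|u|² + |v|²)`, and `L ≠ 0` would force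
`|u|² + |v|² ≥ c / x` near `0`, contradicting integrability (`limit_eq_zero`).
-/

open MeasureTheory Set Filter

/-- Local absolute continuity on `(0,1]` with density `g`, in the integral form used by `MemH1a`
and `MemH2a`. -/
def IsPrim (f g : ℝ → ℂ) : Prop :=
  (∀ x ∈ Ioc (0:ℝ) 1, ∀ y ∈ Ioc (0:ℝ) 1, IntervalIntegrable g volume x y) ∧
  (∀ x ∈ Ioc (0:ℝ) 1, ∀ y ∈ Ioc (0:ℝ) 1, f y - f x = ∫ t in x..y, g t)

lemma IsPrim.continuousOn {f g : ℝ → ℂ} (h : IsPrim f g) : ContinuousOn f (Ioc 0 1) := by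
  intro x hx
  have hx2 : x / 2 ∈ Ioc (0:ℝ) 1 := ⟨by linarith [hx.1], by linarith [hx.1, hx.2]⟩
  have h1 : (1:ℝ) ∈ Ioc (0:ℝ) 1 := ⟨one_pos, le_rfl⟩
  have hc : ContinuousOn (fun y => f (x / 2) + ∫ t in (x/2)..y, g t) (Icc (x / 2) 1) := by
    have := intervalIntegral.continuousOn_primitive_interval' (h.1 _ hx2 _ h1) left_mem_uIcc
    rw [uIcc_of_le hx2.2] at this
    exact continuousOn_const.add this
  have hc' : ContinuousOn f (Icc (x / 2) 1) := by
    refine hc.congr fun y hy => ?_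
    beta_reduce
    rw [← h.2 _ hx2 y ⟨by linarith [hx2.1, hy.1], hy.2⟩]
    ring
  refine (hc' x ⟨by linarith [hx.1], hx.2⟩).mono_of_mem_nhdsWithin ?_
  have : Ioi (x / 2) ∈ nhds x := Ioi_mem_nhds (by linarith [hx.1])
  filter_upwards [mem_nhdsWithin_of_mem_nhds this, self_mem_nhdsWithin] with y hy hy'
  exact ⟨le_of_lt hy, hy'.2⟩

lemma IsPrim.hasDerivAt {f g : ℝ → ℂ} (h : IsPrim f g) (hg : ContinuousOn g (Ioo 0 1))
    {x : ℝ} (hx : x ∈ Ioo (0:ℝ) 1) : HasDerivAt f (g x) x := by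
  have hx' : x ∈ Ioc (0:ℝ) 1 := ⟨hx.1, hx.2.le⟩
  have hd : HasDerivAt (fun y => ∫ t in x..y, g t) (g x) x :=
    intervalIntegral.integral_hasDerivAt_right (h.1 x hx' x hx')
      (hg.stronglyMeasurableAtFilter isOpen_Ioo x hx)
      (hg.continuousAt (isOpen_Ioo.mem_nhds hx))
  refine (hd.const_add (f x)).congr_of_eventuallyEq ?_
  filter_upwards [isOpen_Ioo.mem_nhds hx] with y hy
  rw [← h.2 x hx' y ⟨hy.1, hy.2.le⟩]
  ring

/-- The elementary inequality `|g| ≤ 1/s + s |g|²` integrated over a subinterval of `(0,1)`. -/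
lemma IsPrim.norm_sub_le {f g : ℝ → ℂ} (h : IsPrim f g)
    (hg2 : IntegrableOn (fun x => ‖g x‖ ^ 2) (Ioo 0 1))
    {x y s : ℝ} (hx : x ∈ Ioc (0:ℝ) 1) (hy : y ∈ Ioc (0:ℝ) 1) (hyx : y ≤ x) (hs : 0 < s) :
    ‖f x - f y‖ ≤ (x - y) * s⁻¹ + s * ∫ t in Ioo (0:ℝ) 1, ‖g t‖ ^ 2 := by
  have hsub : Ioo y x ⊆ Ioo (0:ℝ) 1 := Ioo_subset_Ioo hy.1.le hx.2
  have hi2 : IntervalIntegrable (fun t => ‖g t‖ ^ 2) volume y x := by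
    rw [intervalIntegrable_iff_integrableOn_Ioo_of_le hyx]
    exact hg2.mono_set hsub
  have hci : IntervalIntegrable (fun _ : ℝ => s⁻¹) volume y x := intervalIntegrable_const
  rw [h.2 y hy x hx]
  calc ‖∫ t in y..x, g t‖ ≤ ∫ t in y..x, ‖g t‖ :=
        intervalIntegral.norm_integral_le_integral_norm hyx
    _ ≤ ∫ t in y..x, (s⁻¹ + s * ‖g t‖ ^ 2) := by
        refine intervalIntegral.integral_mono_on hyx (h.1 y hy x hx).norm
          (hci.add (hi2.const_mul s)) fun t _ => ?_
        have : 0 < s⁻¹ := inv_pos.mpr hs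
        have h1 : s * s⁻¹ = 1 := mul_inv_cancel₀ hs.ne'
        have h2 : 0 ≤ s * (‖g t‖ - s⁻¹) ^ 2 := by positivity
        have h3 : s * (‖g t‖ - s⁻¹) ^ 2 = s * ‖g t‖ ^ 2 - 2 * ‖g t‖ + s⁻¹ := by
          linear_combination (s⁻¹ - 2 * ‖g t‖) * h1
        nlinarith [norm_nonneg (g t)]
    _ = (x - y) * s⁻¹ + s * ∫ t in y..x, ‖g t‖ ^ 2 := by
        rw [intervalIntegral.integral_add hci (hi2.const_mul s),
          intervalIntegral.integral_const, intervalIntegral.integral_const_mul, smul_eq_mul]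
    _ ≤ _ := by
        gcongr
        rw [intervalIntegral.integral_of_le hyx, integral_Ioc_eq_integral_Ioo]
        exact setIntegral_mono_set hg2 (ae_of_all _ fun t => by positivity)
          hsub.eventuallyLE

lemma IsPrim.norm_le_const {f g : ℝ → ℂ} (h : IsPrim f g)
    (hg2 : IntegrableOn (fun x => ‖g x‖ ^ 2) (Ioo 0 1)) :
    ∃ C, 0 ≤ C ∧ ∀ x ∈ Ioc (0:ℝ) 1, ‖f x‖ ≤ C := by
  have hK : 0 ≤ ∫ t in Ioo (0:ℝ) 1, ‖g t‖ ^ 2 := integral_nonneg fun t => by positivity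
  refine ⟨‖f 1‖ + (1 + ∫ t in Ioo (0:ℝ) 1, ‖g t‖ ^ 2), by positivity, fun x hx => ?_⟩
  have h1 := h.norm_sub_le hg2 ⟨one_pos, le_rfl⟩ hx hx.2 one_pos
  have h2 := norm_sub_norm_le (f x) (f 1)
  rw [norm_sub_rev] at h2
  have := hx.1
  linarith

/-- Taking `s = √x` in `IsPrim.norm_sub_le` replaces the Cauchy–Schwarz inequality. -/
lemma IsPrim.norm_le_sqrt {f g : ℝ → ℂ} (h : IsPrim f g)
    (hg2 : IntegrableOn (fun x => ‖g x‖ ^ 2) (Ioo 0 1))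
    (hf : Tendsto f (nhdsWithin 0 (Ioi 0)) (nhds 0)) :
    ∃ C, 0 ≤ C ∧ ∀ x ∈ Ioc (0:ℝ) 1, ‖f x‖ ≤ C * √x := by
  have hK : 0 ≤ ∫ t in Ioo (0:ℝ) 1, ‖g t‖ ^ 2 := integral_nonneg fun t => by positivity
  refine ⟨1 + ∫ t in Ioo (0:ℝ) 1, ‖g t‖ ^ 2, by positivity, fun x hx => ?_⟩
  have hs : 0 < √x := Real.sqrt_pos.mpr hx.1
  have hlim : Tendsto (fun y => ‖f x - f y‖) (nhdsWithin 0 (Ioi 0)) (nhds ‖f x - 0‖) :=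
    (tendsto_const_nhds.sub hf).norm
  rw [sub_zero] at hlim
  refine le_of_tendsto hlim ?_
  filter_upwards [Ioo_mem_nhdsGT hx.1] with y hy
  have h1 := h.norm_sub_le hg2 hx ⟨hy.1, hy.2.le.trans hx.2⟩ hy.2.le hs
  have h2 : (x - y) * (√x)⁻¹ ≤ √x := by
    rw [← div_eq_mul_inv, div_le_iff₀ hs, Real.mul_self_sqrt hx.1.le]
    linarith [hy.1]
  linarith

/-- A function dominated by `C √x (|u| + |v|)` with `u, v ∈ L²` can only have the limit `0` at
`0⁺`, since `1/x` is not integrable there. -/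
lemma limit_eq_zero {W u v : ℝ → ℂ} {L : ℂ} {C : ℝ}
    (hL : Tendsto W (nhdsWithin 0 (Ioi 0)) (nhds L))
    (hu : IntegrableOn (fun x => ‖u x‖ ^ 2) (Ioo 0 1))
    (hv : IntegrableOn (fun x => ‖v x‖ ^ 2) (Ioo 0 1))
    (hW : ∀ x ∈ Ioc (0:ℝ) 1, ‖W x‖ ≤ C * √x * (‖u x‖ + ‖v x‖)) : L = 0 := by
  by_contra hne
  have hpos : 0 < ‖L‖ := norm_pos_iff.mpr hne
  have hev : ∀ᶠ x in nhdsWithin (0:ℝ) (Ioi 0), ‖L‖ / 2 < ‖W x‖ :=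
    hL.norm.eventually (lt_mem_nhds (by linarith))
  obtain ⟨d, hd0, hd⟩ := (mem_nhdsGT_iff_exists_Ioo_subset).mp hev
  have hd0 : 0 < d := hd0
  set e := min d 1 with he
  have he0 : 0 < e := lt_min hd0 one_pos
  have hsub : Ioo 0 e ⊆ Ioo (0:ℝ) 1 := Ioo_subset_Ioo le_rfl (min_le_right _ _)
  have hdom : IntegrableOn (fun x => (8 * C ^ 2 / ‖L‖ ^ 2) * (‖u x‖ ^ 2 + ‖v x‖ ^ 2))
      (Ioo 0 e) := ((hu.mono_set hsub).add (hv.mono_set hsub)).const_mul _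
  have hinv : IntegrableOn (fun x : ℝ => x⁻¹) (Ioo 0 e) := by
    refine Integrable.mono' hdom measurable_inv.aestronglyMeasurable ?_
    refine (ae_restrict_iff' measurableSet_Ioo).mpr (ae_of_all _ fun x hx => ?_)
    have hx0 : 0 < x := hx.1
    rw [Real.norm_of_nonneg (inv_nonneg.mpr hx0.le)]
    have h1 : ‖L‖ / 2 < ‖W x‖ := hd ⟨hx.1, hx.2.trans_le (min_le_left _ _)⟩
    have h2 := hW x ⟨hx.1, (hsub hx).2.le⟩
    have h3 : (‖L‖ / 2) ^ 2 ≤ (C * √x * (‖u x‖ + ‖v x‖)) ^ 2 := by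
      gcongr
      linarith
    have h4 : (C * √x * (‖u x‖ + ‖v x‖)) ^ 2 = C ^ 2 * x * (‖u x‖ + ‖v x‖) ^ 2 := by
      rw [mul_pow, mul_pow, Real.sq_sqrt hx0.le]
    have h5 : C ^ 2 * x * (‖u x‖ + ‖v x‖) ^ 2
        ≤ C ^ 2 * x * (2 * (‖u x‖ ^ 2 + ‖v x‖ ^ 2)) := by
      gcongr
      nlinarith [sq_nonneg (‖u x‖ - ‖v x‖)]
    rw [inv_eq_one_div, div_mul_eq_mul_div, div_le_div_iff₀ hx0 (by positivity)]
    nlinarith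
  have hbad : IntervalIntegrable (fun x : ℝ => x⁻¹) volume 0 e :=
    (intervalIntegrable_iff_integrableOn_Ioo_of_le he0.le).mpr hinv
  rcases intervalIntegrable_inv_iff.mp hbad with h | h
  · exact he0.ne h
  · exact h left_mem_uIcc

/-- Equal `L²`-norms of the two components: if `u, v ∈ H²_a(0,1)` solve the coupled
degenerate system `λ²u + (au')' − αv = 0`, `λ²v + (av')' − αu = 0` with `u(1) = v(1) = 0`
(and the degenerate boundary conditions at `0` according to the value of `m_a`), then
`∫₀¹|u|² = ∫₀¹|v|²`. -/
theorem equal_L2_norms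
    (a a' : ℝ → ℝ) (ma : ℝ)
    (ha_cont : ContinuousOn a (Icc 0 1))
    (ha_deriv : ∀ x ∈ Ioc (0:ℝ) 1, HasDerivAt a (a' x) x)
    (ha'_cont : ContinuousOn a' (Ioc 0 1))
    (ha_pos : ∀ x ∈ Ioc (0:ℝ) 1, 0 < a x)
    (ha0 : a 0 = 0)
    (hma : IsLUB {r : ℝ | ∃ x ∈ Ioc (0:ℝ) 1, r = x * |a' x| / a x} ma)
    (hma_lt : ma < 2)
    (lam α : ℝ) (hα : α ≠ 0)
    (u u' wu v v' wv : ℝ → ℂ)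
    (hu : MemH2a a u u' wu) (hv : MemH2a a v v' wv)
    (hequ : ∀ x ∈ Ioo (0:ℝ) 1, (lam : ℂ) ^ 2 * u x + wu x - (α : ℂ) * v x = 0)
    (heqv : ∀ x ∈ Ioo (0:ℝ) 1, (lam : ℂ) ^ 2 * v x + wv x - (α : ℂ) * u x = 0)
    (hu1 : u 1 = 0) (hv1 : v 1 = 0)
    (hbc0 : ma < 1 →
      Tendsto u (nhdsWithin 0 (Ioi 0)) (nhds 0) ∧
      Tendsto v (nhdsWithin 0 (Ioi 0)) (nhds 0))
    (hbc0' : 1 ≤ ma →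
      Tendsto (fun x : ℝ => (a x : ℂ) * u' x) (nhdsWithin 0 (Ioi 0)) (nhds 0) ∧
      Tendsto (fun x : ℝ => (a x : ℂ) * v' x) (nhdsWithin 0 (Ioi 0)) (nhds 0)) :
    ∫ x in Ioo (0:ℝ) 1, ‖u x‖ ^ 2 = ∫ x in Ioo (0:ℝ) 1, ‖v x‖ ^ 2 := by
  obtain ⟨⟨hu2, hui, huf, -⟩, -, hwu2, hwui, hwuf⟩ := hu
  obtain ⟨⟨hv2, hvi, hvf, -⟩, -, hwv2, hwvi, hwvf⟩ := hv
  set p : ℝ → ℂ := fun x => (a x : ℂ) * u' x with hp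
  set q : ℝ → ℂ := fun x => (a x : ℂ) * v' x with hq
  have Hu : IsPrim u u' := ⟨hui, huf⟩
  have Hv : IsPrim v v' := ⟨hvi, hvf⟩
  have Hp : IsPrim p wu := ⟨hwui, hwuf⟩
  have Hq : IsPrim q wv := ⟨hwvi, hwvf⟩
  have hsub : Ioo (0:ℝ) 1 ⊆ Ioc 0 1 := Ioo_subset_Ioc_self
  have cu := Hu.continuousOn
  have cv := Hv.continuousOn
  have cp := Hp.continuousOn
  have cq := Hq.continuousOn
  -- The densities are continuous on `(0,1)`: those of `u, v` are `p / a, q / a`, and those of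
  -- `p, q` are given by the equations.
  have ca : ContinuousOn (fun x => (a x : ℂ)) (Ioo 0 1) :=
    Complex.continuous_ofReal.comp_continuousOn
      (ha_cont.mono Ioo_subset_Icc_self)
  have ane : ∀ x ∈ Ioo (0:ℝ) 1, (a x : ℂ) ≠ 0 := fun x hx =>
    Complex.ofReal_ne_zero.mpr (ha_pos x (hsub hx)).ne'
  have cu' : ContinuousOn u' (Ioo 0 1) :=
    ((cp.mono hsub).div ca ane).congr fun x hx =>
      (mul_div_cancel_left₀ (u' x) (ane x hx)).symm
  have cv' : ContinuousOn v' (Ioo 0 1) :=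
    ((cq.mono hsub).div ca ane).congr fun x hx =>
      (mul_div_cancel_left₀ (v' x) (ane x hx)).symm
  have ewu : ∀ x ∈ Ioo (0:ℝ) 1, wu x = α * v x - (lam : ℂ) ^ 2 * u x := fun x hx => by
    linear_combination hequ x hx
  have ewv : ∀ x ∈ Ioo (0:ℝ) 1, wv x = α * u x - (lam : ℂ) ^ 2 * v x := fun x hx => by
    linear_combination heqv x hx
  have cwu : ContinuousOn wu (Ioo 0 1) :=
    ((continuousOn_const.mul (cv.mono hsub)).sub
      (continuousOn_const.mul (cu.mono hsub))).congr ewu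
  have cwv : ContinuousOn wv (Ioo 0 1) :=
    ((continuousOn_const.mul (cu.mono hsub)).sub
      (continuousOn_const.mul (cv.mono hsub))).congr ewv
  set W : ℝ → ℂ := fun x => p x * star (v x) - u x * star (q x) with hW
  set D : ℝ → ℂ := fun x => ((α * (‖v x‖ ^ 2 - ‖u x‖ ^ 2) : ℝ) : ℂ) with hD
  have cW : ContinuousOn W (Ioc 0 1) :=
    (cp.mul (continuous_star.comp_continuousOn cv)).sub
      (cu.mul (continuous_star.comp_continuousOn cq))
  have dW : ∀ x ∈ Ioo (0:ℝ) 1, HasDerivAt W (D x) x := by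
    intro x hx
    have h := ((Hp.hasDerivAt cwu hx).mul (Hv.hasDerivAt cv' hx).star).sub
      ((Hu.hasDerivAt cu' hx).mul (Hq.hasDerivAt cwv hx).star)
    refine h.congr_deriv ?_
    have e1 : v x * star (v x) = ((‖v x‖ : ℂ)) ^ 2 := Complex.mul_conj' (v x)
    have e2 : u x * star (u x) = ((‖u x‖ : ℂ)) ^ 2 := Complex.mul_conj' (u x)
    have e3 : star (wv x) = α * star (u x) - (lam : ℂ) ^ 2 * star (v x) := by
      rw [ewv x hx]; simp
    have e4 : star (q x) = a x * star (v' x) := by simp [hq]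
    have e5 : p x = a x * u' x := rfl
    rw [e3, e4, e5, ewu x hx]
    simp only [hD]
    push_cast
    rw [← e1, ← e2]
    ring
  have iD : IntegrableOn D (Ioo 0 1) := ((hv2.sub hu2).const_mul α).ofReal
  have iD' : IntervalIntegrable D volume 0 1 :=
    (intervalIntegrable_iff_integrableOn_Ioo_of_le zero_le_one).mpr iD
  have W1 : W 1 = 0 := by simp [hW, hu1, hv1]
  have eW : ∀ x ∈ Ioo (0:ℝ) 1, W x = ∫ t in (1:ℝ)..x, D t := by
    intro x hx
    have := intervalIntegral.integral_eq_sub_of_hasDerivAt_of_le hx.2.le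
      (cW.mono fun y hy => ⟨hx.1.trans_le hy.1, hy.2⟩)
      (fun y hy => dW y ⟨hx.1.trans hy.1, hy.2⟩)
      (iD'.mono_set (by
        rw [uIcc_of_le hx.2.le, uIcc_of_le zero_le_one]
        exact Icc_subset_Icc hx.1.le le_rfl))
    rw [intervalIntegral.integral_symm, this, W1]
    ring
  have limW : Tendsto W (nhdsWithin 0 (Ioi 0)) (nhds (∫ t in (1:ℝ)..0, D t)) := by
    have hc := intervalIntegral.continuousOn_primitive_interval' iD' right_mem_uIcc 0 left_mem_uIcc
    rw [uIcc_of_le zero_le_one] at hc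
    have hc' := hc.tendsto.mono_left (nhdsWithin_mono 0 (Ioo_subset_Icc_self (a := (0:ℝ))))
    rw [nhdsWithin_Ioo_eq_nhdsGT one_pos] at hc'
    refine hc'.congr' ?_
    filter_upwards [Ioo_mem_nhdsGT (zero_lt_one (α := ℝ))] with x hx
    exact (eW x hx).symm
  have nW : ∀ x, ‖W x‖ ≤ ‖p x‖ * ‖v x‖ + ‖u x‖ * ‖q x‖ := fun x => by
    refine (norm_sub_le _ _).trans_eq ?_
    simp
  have key : ∫ t in (1:ℝ)..0, D t = 0 := by
    rcases lt_or_ge ma 1 with h | h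
    · obtain ⟨tu, tv⟩ := hbc0 h
      obtain ⟨C, hC, hCp⟩ := Hp.norm_le_const hwu2
      obtain ⟨C', hC', hCq⟩ := Hq.norm_le_const hwv2
      refine tendsto_nhds_unique limW (squeeze_zero_norm' ?_
        (a := fun x => C * ‖v x‖ + ‖u x‖ * C') ?_)
      · filter_upwards [Ioo_mem_nhdsGT (zero_lt_one (α := ℝ))] with x hx
        refine (nW x).trans ?_
        gcongr
        · exact hCp x (hsub hx)
        · exact hCq x (hsub hx)
      · simpa using (tv.norm.const_mul C).add (tu.norm.mul_const C')
    · obtain ⟨tp, tq⟩ := hbc0' h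
      obtain ⟨C, hC, hCp⟩ := Hp.norm_le_sqrt hwu2 tp
      obtain ⟨C', hC', hCq⟩ := Hq.norm_le_sqrt hwv2 tq
      refine limit_eq_zero (C := C + C') limW hu2 hv2 fun x hx => (nW x).trans ?_
      have h1 : ‖p x‖ * ‖v x‖ ≤ C * √x * ‖v x‖ := by gcongr; exact hCp x hx
      have h2 : ‖u x‖ * ‖q x‖ ≤ ‖u x‖ * (C' * √x) := by gcongr; exact hCq x hx
      have h3 : 0 ≤ C * √x * ‖u x‖ := by positivity
      have h4 : 0 ≤ C' * √x * ‖v x‖ := by positivity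
      linarith
  rw [intervalIntegral.integral_symm, neg_eq_zero, intervalIntegral.integral_of_le zero_le_one,
    integral_Ioc_eq_integral_Ioo, hD, integral_complex_ofReal, Complex.ofReal_eq_zero,
    integral_const_mul, integral_sub hv2 hu2] at key
  rcases mul_eq_zero.mp key with h | h
  · exact absurd h hα
  · linarith
end

section
/- Let γ ∈ [0,1), set ν = (1−γ)/(2−γ), and let μ > 0. Define the Bessel function of the first kind of order ν by the convergent series J_ν(y) = Σ_{m=0}^∞ ((−1)^m / (m! · Γ(m+ν+1))) · (y/2)^{2m+ν} for y > 0, and define Φ(x) = x^{(1−γ)/2} · J_ν( (2/(2−γ)) · √μ · x^{(2−γ)/2} ) for x ∈ (0,1]. Then Φ is twice differentiable on (0,1], satisfies the degenerate equation (x^γ Φ'(x))' + μ Φ(x) = 0 for every x ∈ (0,1], and lim_{x→0⁺} Φ(x) = 0. -/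
open Set Filter

/-!
Write `k = 2 - γ`, `ν = (1 - γ) / k` and `F(t) = ∑ aₘ tᵐ` with
`aₘ = (-1)ᵐ / (m! Γ(m + ν + 1))`. Since `k ν = 1 - γ`, the fractional powers in the Bessel series
combine to give, for `x > 0`, `Φ(x) = C x^(1-γ) F(s x^k)` with `s = μ / k²` and a constant `C`
(`PhiBessel_eq`).

As `1 / Γ(m + ν + 1)` is bounded in `m`, `F` is dominated by an exponential series, hence entire
and differentiable term by term (`hasDerivAt_powSum`). The functional equation of `Γ` gives
`(m + 1) (m + ν + 1) aₘ₊₁ = -aₘ`, that is, `t F'' + (ν + 1) F' + F = 0` (`besselCoeff_ode`).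
With `z = s x^k` the flux is `x^γ Φ' = C ((1 - γ) F(z) + k z F'(z))`; its derivative is
`C k z' ((ν + 1) F'(z) + z F''(z)) = -C k z' F(z) = -μ Φ`. The limit at `0⁺` follows from
`1 - γ > 0` and the continuity of `F`.
-/

/-- The Bessel function of the first kind of order `ν`, defined by its power series
(for positive arguments, using real powers). -/
noncomputable def besselJ (ν : ℝ) (y : ℝ) : ℝ :=
  ∑' m : ℕ, ((-1 : ℝ) ^ m / (m.factorial * Real.Gamma ((m : ℝ) + ν + 1))) *
    (y / 2) ^ (2 * (m : ℝ) + ν)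

/-- The function `Φ(x) = x^{(1−γ)/2} J_ν((2/(2−γ))√μ x^{(2−γ)/2})`, `ν = (1−γ)/(2−γ)`. -/
noncomputable def PhiBessel (γ μ : ℝ) (x : ℝ) : ℝ :=
  x ^ ((1 - γ) / 2) *
    besselJ ((1 - γ) / (2 - γ)) ((2 / (2 - γ)) * Real.sqrt μ * x ^ ((2 - γ) / 2))

/-- The sum of the power series with coefficients `a`. -/
noncomputable def powSum (a : ℕ → ℝ) (t : ℝ) : ℝ := ∑' m, a m * t ^ m

/-- The coefficients of the termwise derivative of the power series with coefficients `a`. -/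
def shiftCoeff (a : ℕ → ℝ) (m : ℕ) : ℝ := (m + 1) * a (m + 1)

/-- Coefficients dominated by those of a multiple of the exponential series; the class is
stable under termwise differentiation. -/
def ExpBounded (a : ℕ → ℝ) : Prop := ∃ K : ℝ, ∀ m, |a m| ≤ K / m.factorial

lemma ExpBounded.shift {a : ℕ → ℝ} (h : ExpBounded a) : ExpBounded (shiftCoeff a) := by
  obtain ⟨K, hK⟩ := h
  refine ⟨K, fun m => ?_⟩
  have h1 := hK (m + 1)
  have hm : (0 : ℝ) < m + 1 := by positivity
  rw [shiftCoeff, abs_mul, abs_of_pos hm]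
  calc ((m : ℝ) + 1) * |a (m + 1)| ≤ (m + 1) * (K / (m + 1).factorial) := by gcongr
    _ = K / m.factorial := by
      rw [Nat.factorial_succ]; push_cast
      have : (m.factorial : ℝ) ≠ 0 := by positivity
      field_simp

lemma ExpBounded.summable {a : ℕ → ℝ} (h : ExpBounded a) (t : ℝ) :
    Summable fun m => a m * t ^ m := by
  obtain ⟨K, hK⟩ := h
  refine Summable.of_norm_bounded ((Real.summable_pow_div_factorial |t|).mul_left K) fun m => ?_
  rw [Real.norm_eq_abs, abs_mul, abs_pow]
  calc |a m| * |t| ^ m ≤ K / m.factorial * |t| ^ m := by gcongr; exact hK m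
    _ = _ := by ring

lemma hasDerivAt_powSum {a : ℕ → ℝ} (h : ExpBounded a) (t : ℝ) :
    HasDerivAt (powSum a) (powSum (shiftCoeff a) t) t := by
  have hs := h.shift
  obtain ⟨K, hK⟩ := hs
  set R := |t| + 1 with hR
  have hR0 : 0 ≤ R := by positivity
  -- the majorant on the interval `(-R, R)` of the termwise derivatives
  let u : ℕ → ℝ := fun n => |a n| * (n * R ^ (n - 1))
  have hu : Summable u := by
    rw [← summable_nat_add_iff 1]
    refine Summable.of_norm_bounded ((Real.summable_pow_div_factorial R).mul_left K) fun m => ?_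
    have h1 := hK m
    have hm : (0 : ℝ) < m + 1 := by positivity
    rw [shiftCoeff, abs_mul, abs_of_pos hm] at h1
    have : u (m + 1) = ((m + 1) * |a (m + 1)|) * R ^ m := by
      simp only [u, Nat.add_sub_cancel]; push_cast; ring
    rw [this, Real.norm_of_nonneg (by positivity)]
    calc _ ≤ K / m.factorial * R ^ m := by gcongr
      _ = _ := by ring
  have ht : t ∈ Ioo (-R) R := by
    rw [mem_Ioo, ← abs_lt]; linarith
  have key := hasDerivAt_tsum_of_isPreconnected (g := fun n t => a n * t ^ n)
    (g' := fun n t => a n * (n * t ^ (n - 1))) (t := Ioo (-R) R) (y₀ := t) hu isOpen_Ioo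
    isPreconnected_Ioo (fun n y _ => (hasDerivAt_pow n y).const_mul (a n))
    (fun n y hy => by
      have hy' : |y| ≤ R := (abs_lt.mpr hy).le
      rw [Real.norm_eq_abs, abs_mul, abs_mul, abs_pow, Nat.abs_cast]
      simp only [u]
      gcongr) ht (h.summable t) ht
  have hsum : Summable fun n : ℕ => a n * (n * t ^ (n - 1)) := by
    rw [← summable_nat_add_iff 1]
    refine (h.shift.summable t).congr fun m => ?_
    simp only [shiftCoeff, Nat.add_sub_cancel]; push_cast; ring
  have he : ∑' n : ℕ, a n * (n * t ^ (n - 1)) = powSum (shiftCoeff a) t := by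
    rw [hsum.tsum_eq_zero_add, powSum]
    simp only [Nat.cast_zero, zero_mul, mul_zero, zero_add]
    refine tsum_congr fun m => ?_
    simp only [shiftCoeff, Nat.add_sub_cancel]; push_cast; ring
  rw [he] at key
  exact key

/-- The coefficients of the entire function that equals `t^(-ν/2) J_ν(2√t)` for `t > 0`. -/
noncomputable def besselCoeff (ν : ℝ) (m : ℕ) : ℝ :=
  (-1 : ℝ) ^ m / (m.factorial * Real.Gamma ((m : ℝ) + ν + 1))

lemma expBounded_besselCoeff {ν : ℝ} (hν : 0 ≤ ν) : ExpBounded (besselCoeff ν) := by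
  have hpos : ∀ m : ℕ, 0 < Real.Gamma ((m : ℝ) + ν + 1) := fun m =>
    Real.Gamma_pos_of_pos (by positivity)
  have hmono : ∀ m : ℕ, Real.Gamma (ν + 1) ≤ Real.Gamma ((m : ℝ) + ν + 1) := by
    intro m
    induction m with
    | zero => simp
    | succ m ih =>
      have h0 : (0 : ℝ) < (m : ℝ) + ν + 1 := by positivity
      have : ((m + 1 : ℕ) : ℝ) + ν + 1 = ((m : ℝ) + ν + 1) + 1 := by push_cast; ring
      rw [this, Real.Gamma_add_one h0.ne']
      have := hpos m
      have hm : (0 : ℝ) ≤ m := by positivity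
      nlinarith [mul_nonneg (add_nonneg hm hν) this.le]
  refine ⟨(Real.Gamma (ν + 1))⁻¹, fun m => ?_⟩
  have h1 : 0 < Real.Gamma (ν + 1) := Real.Gamma_pos_of_pos (by positivity)
  rw [besselCoeff, abs_div, abs_pow, abs_neg, abs_one, one_pow,
    abs_of_pos (mul_pos (by positivity) (hpos m)), inv_eq_one_div, div_div]
  refine one_div_le_one_div_of_le (by positivity) ?_
  rw [mul_comm]
  gcongr
  exact hmono m

lemma besselCoeff_succ {ν : ℝ} (hν : 0 ≤ ν) (m : ℕ) :
    ((m : ℝ) + 1) * (m + ν + 1) * besselCoeff ν (m + 1) = -besselCoeff ν m := by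
  have h0 : (0 : ℝ) < (m : ℝ) + ν + 1 := by positivity
  have hΓ := (Real.Gamma_pos_of_pos h0).ne'
  have : ((m + 1 : ℕ) : ℝ) + ν + 1 = ((m : ℝ) + ν + 1) + 1 := by push_cast; ring
  have hf : (m.factorial : ℝ) ≠ 0 := by positivity
  rw [besselCoeff, besselCoeff, this, Real.Gamma_add_one h0.ne', Nat.factorial_succ, pow_succ]
  push_cast
  field_simp

lemma besselCoeff_ode {ν : ℝ} (hν : 0 ≤ ν) (t : ℝ) :
    t * powSum (shiftCoeff (shiftCoeff (besselCoeff ν))) t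
      + (ν + 1) * powSum (shiftCoeff (besselCoeff ν)) t + powSum (besselCoeff ν) t = 0 := by
  have hb := expBounded_besselCoeff hν
  set a := besselCoeff ν with ha
  have hshift : Summable fun m : ℕ => (m : ℝ) * shiftCoeff a m * t ^ m := by
    rw [← summable_nat_add_iff 1]
    refine ((hb.shift.shift.summable t).mul_left t).congr fun m => ?_
    rw [shiftCoeff]; push_cast; ring
  have h2 : t * powSum (shiftCoeff (shiftCoeff a)) t
      = ∑' m : ℕ, (m : ℝ) * shiftCoeff a m * t ^ m := by
    rw [hshift.tsum_eq_zero_add, powSum, ← tsum_mul_left]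
    simp only [Nat.cast_zero, zero_mul, zero_add]
    refine tsum_congr fun m => ?_
    rw [shiftCoeff]; push_cast; ring
  rw [h2, powSum, powSum, ← tsum_mul_left,
    ← hshift.tsum_add ((hb.shift.summable t).mul_left _),
    ← (hshift.add ((hb.shift.summable t).mul_left _)).tsum_add (hb.summable t)]
  rw [← tsum_zero (α := ℝ) (β := ℕ)]
  refine tsum_congr fun m => ?_
  have := besselCoeff_succ hν m
  rw [← ha] at this
  simp only [shiftCoeff]
  linear_combination t ^ m * this

lemma PhiBessel_eq {γ μ : ℝ} (hγ1 : γ < 1) (hμ : 0 < μ) {x : ℝ} (hx : 0 < x) :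
    PhiBessel γ μ x = (Real.sqrt μ / (2 - γ)) ^ ((1 - γ) / (2 - γ)) *
      (x ^ (1 - γ) * powSum (besselCoeff ((1 - γ) / (2 - γ))) (μ / (2 - γ) ^ 2 * x ^ (2 - γ))) := by
  have hk : 0 < 2 - γ := by linarith
  set ν := (1 - γ) / (2 - γ) with hν
  have hkν : (2 - γ) * ν = 1 - γ := by rw [hν]; field_simp
  have hc : 0 < Real.sqrt μ / (2 - γ) := div_pos (Real.sqrt_pos.mpr hμ) hk
  rw [PhiBessel, besselJ, powSum, ← tsum_mul_left, ← tsum_mul_left, ← tsum_mul_left]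
  refine tsum_congr fun m => ?_
  rw [← hν]
  have h1 : 2 / (2 - γ) * Real.sqrt μ * x ^ ((2 - γ) / 2) / 2
      = Real.sqrt μ / (2 - γ) * x ^ ((2 - γ) / 2) := by ring
  have h2 : (Real.sqrt μ / (2 - γ)) ^ (2 * (m : ℝ) + ν)
      = (μ / (2 - γ) ^ 2) ^ m * (Real.sqrt μ / (2 - γ)) ^ ν := by
    rw [Real.rpow_add hc, Real.rpow_mul hc.le, Real.rpow_natCast]
    congr 2
    rw [Real.rpow_two, div_pow, Real.sq_sqrt hμ.le]
  have h3 : x ^ ((1 - γ) / 2) * (x ^ ((2 - γ) / 2)) ^ (2 * (m : ℝ) + ν)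
      = x ^ (1 - γ) * (x ^ (2 - γ)) ^ m := by
    rw [← Real.rpow_mul hx.le, ← Real.rpow_natCast, ← Real.rpow_mul hx.le, ← Real.rpow_add hx,
      ← Real.rpow_add hx]
    congr 1
    linear_combination hkν / 2
  rw [h1, Real.mul_rpow hc.le (by positivity), h2, mul_pow, besselCoeff]
  linear_combination ((-1 : ℝ) ^ m / (m.factorial * Real.Gamma ((m : ℝ) + ν + 1))) *
    ((μ / (2 - γ) ^ 2) ^ m * (Real.sqrt μ / (2 - γ)) ^ ν) * h3

/-- `Φ` is twice differentiable on `(0,1]`, solves the degenerate equation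
`(x^γ Φ')' + μΦ = 0` there, and tends to `0` as `x → 0⁺`. -/
theorem besselPhi_solves_degenerate_equation
    (γ : ℝ) (hγ0 : 0 ≤ γ) (hγ1 : γ < 1) (μ : ℝ) (hμ : 0 < μ) :
    ∃ Φ' Φ'' Ψ' : ℝ → ℝ,
      (∀ x ∈ Ioc (0:ℝ) 1,
        HasDerivAt (PhiBessel γ μ) (Φ' x) x ∧
        HasDerivAt Φ' (Φ'' x) x ∧
        HasDerivAt (fun t : ℝ => t ^ γ * Φ' t) (Ψ' x) x ∧
        Ψ' x + μ * PhiBessel γ μ x = 0) ∧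
      Tendsto (PhiBessel γ μ) (nhdsWithin 0 (Ioi 0)) (nhds 0) := by
  have hk : 0 < 2 - γ := by linarith
  have hν0 : 0 ≤ (1 - γ) / (2 - γ) := div_nonneg (by linarith) hk.le
  have hrepr := fun {x : ℝ} (hx : 0 < x) => PhiBessel_eq hγ1 hμ hx
  have hode := besselCoeff_ode hν0
  have hb := expBounded_besselCoeff hν0
  have hkν : (2 - γ) * ((1 - γ) / (2 - γ)) = 1 - γ := by field_simp
  set ν := (1 - γ) / (2 - γ) with hν
  set C := (Real.sqrt μ / (2 - γ)) ^ ν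
  set s := μ / (2 - γ) ^ 2 with hs
  have hsμ : (2 - γ) ^ 2 * s = μ := by rw [hs]; field_simp
  set F := powSum (besselCoeff ν)
  set F₁ := powSum (shiftCoeff (besselCoeff ν))
  set F₂ := powSum (shiftCoeff (shiftCoeff (besselCoeff ν)))
  have hF : ∀ t, HasDerivAt F (F₁ t) t := hasDerivAt_powSum hb
  have hF₁ : ∀ t, HasDerivAt F₁ (F₂ t) t := hasDerivAt_powSum hb.shift
  let z : ℝ → ℝ := fun x => s * x ^ (2 - γ)
  -- the flux `x^γ Φ'`
  let Ψ : ℝ → ℝ := fun x => C * ((1 - γ) * F (z x) + (2 - γ) * (z x * F₁ (z x)))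
  have hz : ∀ x, 0 < x → HasDerivAt z (s * ((2 - γ) * x ^ (1 - γ))) x := by
    intro x hx
    have := (Real.hasDerivAt_rpow_const (p := 2 - γ) (Or.inl hx.ne')).const_mul s
    rwa [show 2 - γ - 1 = 1 - γ by ring] at this
  have hΨ : ∀ x, 0 < x → HasDerivAt Ψ (-(μ * PhiBessel γ μ x)) x := by
    intro x hx
    have d := hz x hx
    have dF := (hF (z x)).comp x d
    have dF₁ := (hF₁ (z x)).comp x d
    have := ((dF.const_mul (1 - γ)).add ((d.mul dF₁).const_mul (2 - γ))).const_mul C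
    refine this.congr_deriv ?_
    rw [hrepr hx]
    change _ = -(μ * (C * (x ^ (1 - γ) * F (z x))))
    simp only [Function.comp]
    rw [← hsμ]
    linear_combination C * s * (2 - γ) ^ 2 * x ^ (1 - γ) * hode (z x)
      - C * s * (2 - γ) * x ^ (1 - γ) * F₁ (z x) * hkν
  have hΦ : ∀ x, 0 < x → HasDerivAt (PhiBessel γ μ) (x ^ (-γ) * Ψ x) x := by
    intro x hx
    have dp := Real.hasDerivAt_rpow_const (x := x) (p := 1 - γ) (Or.inl hx.ne')
    have d := ((dp.mul ((hF (z x)).comp x (hz x hx))).const_mul C)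
    have heq : PhiBessel γ μ =ᶠ[nhds x] fun y => C * (y ^ (1 - γ) * F (z y)) := by
      filter_upwards [Ioi_mem_nhds hx] with y hy using hrepr hy
    refine HasDerivAt.congr_of_eventuallyEq (d.congr_deriv ?_) heq
    have e1 : x ^ (1 - γ) * x ^ (1 - γ) = x ^ (-γ) * x ^ (2 - γ) := by
      rw [← Real.rpow_add hx, ← Real.rpow_add hx]; congr 1; ring
    rw [show 1 - γ - 1 = -γ by ring]
    simp only [Function.comp, Ψ]
    have e2 : x ^ (-γ) * z x = s * (x ^ (1 - γ) * x ^ (1 - γ)) := by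
      rw [e1]; simp only [z]; ring
    linear_combination -C * (2 - γ) * F₁ (z x) * e2
  refine ⟨fun x => x ^ (-γ) * Ψ x,
    fun x => -γ * x ^ (-γ - 1) * Ψ x + x ^ (-γ) * (-(μ * PhiBessel γ μ x)),
    fun x => -(μ * PhiBessel γ μ x), fun x hx => ⟨hΦ x hx.1, ?_, ?_, by ring⟩, ?_⟩
  · exact (Real.hasDerivAt_rpow_const (Or.inl hx.1.ne')).mul (hΨ x hx.1)
  · refine (hΨ x hx.1).congr_of_eventuallyEq ?_
    filter_upwards [Ioi_mem_nhds hx.1] with y hy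
    rw [← mul_assoc, ← Real.rpow_add hy, add_neg_cancel, Real.rpow_zero, one_mul]
  · have hFc : Continuous F := continuous_iff_continuousAt.mpr fun t => (hF t).continuousAt
    have hc : Continuous fun x : ℝ => C * (x ^ (1 - γ) * F (s * x ^ (2 - γ))) := by
      have h1 : Continuous fun x : ℝ => x ^ (1 - γ) := Real.continuous_rpow_const (by linarith)
      have h2 : Continuous fun x : ℝ => x ^ (2 - γ) := Real.continuous_rpow_const hk.le
      fun_prop
    have ht := (hc.tendsto 0).mono_left (nhdsWithin_le_nhds (s := Ioi 0))
    have h0 : (0 : ℝ) ^ (1 - γ) = 0 := Real.zero_rpow (by linarith)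
    rw [h0, zero_mul, mul_zero] at ht
    refine ht.congr' ?_
    filter_upwards [self_mem_nhdsWithin] with y hy using (hrepr hy).symm
end

section
/- Let r > 0, ν ∈ ℝ, and ρ > 0. For λ ∈ ℂ set w = 2rλ + iνπ. Then −cosh(w) + iρ·(i·sinh(w) + 1) = 0 if and only if e^{2rλ} = i·e^{−iνπ} or e^{2rλ} = i·((ρ−1)/(ρ+1))·e^{−iνπ}. Equivalently, setting X = e^{w}, the equation is equivalent to the quadratic relation (1+ρ)X² − 2iρX − (ρ−1) = 0. -/
/-!
Put `w = 2rλ + iνπ` and `X = e^w ≠ 0`. Multiplying the characteristic equation by `-2X` and using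
`cosh w = (X + X⁻¹)/2`, `sinh w = (X - X⁻¹)/2` turns it into the quadratic relation, which factors
as `(X - i)((1+ρ)X - i(ρ-1)) = 0`. Since `1 + ρ ≠ 0`, its roots are `i` and `i(ρ-1)/(ρ+1)`;
multiplying by `e^{-iνπ}` gives the values of `e^{2rλ}`.
-/

open Complex

/-- The characteristic equation `−cosh w + iρ(i sinh w + 1) = 0`, with
`w = 2rλ + iνπ`, is equivalent to `e^{2rλ} = i e^{−iνπ}` or
`e^{2rλ} = i((ρ−1)/(ρ+1))e^{−iνπ}`, and also equivalent to the quadratic relation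
`(1+ρ)X² − 2iρX − (ρ−1) = 0` for `X = e^w`. -/
theorem characteristic_equation_roots
    (r ν ρ : ℝ) (hr : 0 < r) (hρ : 0 < ρ) (lam : ℂ) :
    (-Complex.cosh (2 * r * lam + Complex.I * ν * Real.pi)
        + Complex.I * ρ *
          (Complex.I * Complex.sinh (2 * r * lam + Complex.I * ν * Real.pi) + 1) = 0 ↔
      (Complex.exp (2 * r * lam) = Complex.I * Complex.exp (-Complex.I * ν * Real.pi) ∨
       Complex.exp (2 * r * lam)
          = Complex.I * (((ρ : ℂ) - 1) / ((ρ : ℂ) + 1)) *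
              Complex.exp (-Complex.I * ν * Real.pi))) ∧
    (-Complex.cosh (2 * r * lam + Complex.I * ν * Real.pi)
        + Complex.I * ρ *
          (Complex.I * Complex.sinh (2 * r * lam + Complex.I * ν * Real.pi) + 1) = 0 ↔
      (1 + (ρ : ℂ)) * Complex.exp (2 * r * lam + Complex.I * ν * Real.pi) ^ 2
          - 2 * Complex.I * ρ * Complex.exp (2 * r * lam + Complex.I * ν * Real.pi)
          - ((ρ : ℂ) - 1) = 0) := by
  have hρ' : (ρ : ℂ) + 1 ≠ 0 := by
    exact_mod_cast (by positivity : ρ + 1 ≠ 0)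
  have shift (c : ℂ) : Complex.exp (2 * r * lam) = c * Complex.exp (-Complex.I * ν * Real.pi) ↔
      Complex.exp (2 * r * lam + Complex.I * ν * Real.pi) = c := by
    rw [show -Complex.I * ν * Real.pi = -(Complex.I * ν * Real.pi) by ring, Complex.exp_neg,
      Complex.exp_add, eq_mul_inv_iff_mul_eq₀ (Complex.exp_ne_zero _)]
  have shift_one := shift Complex.I
  rw [shift_one, shift]
  generalize 2 * r * lam + Complex.I * ν * Real.pi = w
  have hX : Complex.exp w ≠ 0 := Complex.exp_ne_zero w
  have quad : -Complex.cosh w + Complex.I * ρ * (Complex.I * Complex.sinh w + 1) = 0 ↔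
      (1 + (ρ : ℂ)) * Complex.exp w ^ 2 - 2 * Complex.I * ρ * Complex.exp w
        - ((ρ : ℂ) - 1) = 0 := by
    have key : (1 + (ρ : ℂ)) * Complex.exp w ^ 2 - 2 * Complex.I * ρ * Complex.exp w
        - ((ρ : ℂ) - 1) = (-2 * Complex.exp w) *
          (-Complex.cosh w + Complex.I * ρ * (Complex.I * Complex.sinh w + 1)) := by
      rw [Complex.cosh, Complex.sinh, Complex.exp_neg]
      field_simp
      linear_combination (ρ * (Complex.exp w ^ 2 - 1)) * Complex.I_sq
    rw [key, mul_eq_zero, or_iff_right (mul_ne_zero (by norm_num) hX)]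
  refine ⟨?_, quad⟩
  have factor : (1 + (ρ : ℂ)) * Complex.exp w ^ 2 - 2 * Complex.I * ρ * Complex.exp w
      - ((ρ : ℂ) - 1) = (Complex.exp w - Complex.I) *
        (Complex.exp w * (ρ + 1) - Complex.I * (ρ - 1)) := by
    linear_combination (1 - (ρ : ℂ)) * Complex.I_sq
  rw [quad, factor, mul_eq_zero, sub_eq_zero, sub_eq_zero, ← mul_div_assoc, eq_div_iff hρ']
end
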